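/- arXiv:1802.09490 — 2 statements merged into one kernel-verified Lean document; each statement's English description precedes it below -/
import Mathlib

section
/- Consider a Fragile CPR game with strictly increasing rate of return r. For each player i, let t̄_i = sup{t ≥ 0 : max_{x ∈ S_t} f_i(x,t) > 0}. Then the utilization map x_NE : [0, t̄) → [0,1], t ↦ x^t_NE, is continuous in t on the interval [0, min_{i∈N} t̄_i). -/
/-!
An equilibrium has total investment below `1`, since at or above `1` failure is certain and every
investor would rather withdraw. Hence the jump of `p` at `1` can be removed by replacing `p` on
`[0, 1]` with the continuous extension of its restriction to `[0, 1)`, and deviations need only be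
tested if they keep the total strictly below `1`. The set of pairs (tax rate, equilibrium) in this
weakened sense is closed and the profiles range over a compact cube, so the total investment is
continuous in the tax rate as soon as it is unique.

Uniqueness does not need first-order conditions. Suppose that two equilibria `x`, `y` have totals
`A < B`. Some player `i` has `x i < y i`; for small `ε > 0` the investment `x i + ε` does not
improve on `x i` in the first equilibrium, nor `y i - ε` on `y i` in the second. Multiply the two
inequalities: if `f i` is concave and positive between `A` and `B`, then
`f i A * f i B ≤ f i (A + ε) * f i (B - ε)`, while `x i * y i < (x i + ε) * (y i - ε)`, a
contradiction.

If `r` is increasing, then on `S_t` the effective rate is a nonnegative increasing concave function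
times a nonnegative decreasing concave one, minus a convex one, hence concave; and once `f i` is
positive somewhere at or below `A`, the interval `[A, B]` lies in `S_t`. The condition `t < t̄_i`
provides such a point.
-/

open Real Set

noncomputable section

/-- Effective rate of return of a player with sensitivity `α` and loss aversion `k`,
at utilization `x` and tax rate `t`. -/
def effRate (p r : ℝ → ℝ) (α k x t : ℝ) : ℝ :=
  if 0 ≤ r x - t then
    (r x - t) ^ α * (1 - p x) - k * (1 + t) ^ α * p x
  else
    -(k * ((t - r x) ^ α * (1 - p x) + (1 + t) ^ α * p x))

/-- Partial derivative of the effective rate of return in the utilization. -/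
def effRateDx (p r : ℝ → ℝ) (α k x t : ℝ) : ℝ :=
  deriv (fun z => effRate p r α k z t) x

/-- `g_i(x,t) = α_i f_i(x,t) / (−f_{i,x}(x,t))`. -/
def gFun (p r : ℝ → ℝ) (α k x t : ℝ) : ℝ :=
  α * effRate p r α k x t / (-effRateDx p r α k x t)

/-- Standing assumptions on the failure probability `p`. -/
structure FailureProb (p : ℝ → ℝ) : Prop where
  convexOn : ConvexOn ℝ (Ico (0:ℝ) 1) p
  strictMonoOn : StrictMonoOn p (Ico (0:ℝ) 1)
  contDiffOn : ContDiffOn ℝ 1 p (Ico (0:ℝ) 1)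
  eq_one : ∀ x : ℝ, 1 ≤ x → p x = 1
  mem_unit : ∀ x : ℝ, p x ∈ Icc (0:ℝ) 1

/-- Standing assumptions on the rate of return `r`. -/
structure RateOfReturn (r : ℝ → ℝ) : Prop where
  concaveOn : ConcaveOn ℝ (Icc (0:ℝ) 1) r
  pos : ∀ x ∈ Icc (0:ℝ) 1, 0 < r x
  strictMonoOrAnti : StrictMonoOn r (Icc (0:ℝ) 1) ∨ StrictAntiOn r (Icc (0:ℝ) 1)
  contDiffOn : ContDiffOn ℝ 1 r (Icc (0:ℝ) 1)

/-- `S_t`: the set of utilizations `x ∈ [0,1]` with `r(x) − t ≥ 0`. -/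
def St (r : ℝ → ℝ) (t : ℝ) : Set ℝ := {x | x ∈ Icc (0:ℝ) 1 ∧ 0 ≤ r x - t}

/-- The maximal tax rate `t̄` of the game. -/
def tbar {ι : Type*} [Fintype ι] (p r : ℝ → ℝ) (α k : ι → ℝ) : ℝ :=
  sSup {t : ℝ | 0 ≤ t ∧ ∃ i : ι, ∃ x ∈ Icc (0:ℝ) 1, 0 < effRate p r (α i) (k i) x t}

/-- The maximal tax rate `t̄_i` of a single player. -/
def tbarI (p r : ℝ → ℝ) (α k : ℝ) : ℝ :=
  sSup {t : ℝ | 0 ≤ t ∧ ∃ x ∈ St r t, 0 < effRate p r α k x t}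

/-- `a_t` for a strictly increasing rate of return. -/
def aT (r : ℝ → ℝ) (t : ℝ) : ℝ :=
  if t ≤ r 0 then 0 else sInf {x | x ∈ Icc (0:ℝ) 1 ∧ r x = t}

/-- The threshold `y^t_i` for a strictly decreasing rate of return. -/
def yT (p r : ℝ → ℝ) (α k t : ℝ) : ℝ :=
  if effRate p r α k 0 t ≤ 0 then 0
  else sInf {x | x ∈ St r t ∧ effRate p r α k x t = 0}

/-- `ĝ_i(x,t)`, for a strictly decreasing rate of return. -/
def gHat (p r : ℝ → ℝ) (α k x t : ℝ) : ℝ :=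
  if x < yT p r α k t then gFun p r α k x t else 0

/-- The function `q_i(x,t)` for strictly increasing rate of return. -/
def qFun (p r : ℝ → ℝ) (α x t : ℝ) : ℝ :=
  deriv r x * (1 - p x) ^ 2 /
      ((r x + 1) * deriv p x - α * deriv r x * (1 - p x) * p x) *
    ((1 + t) / (r x - t)) ^ (1 - α)

/-- `b` is a best response of a player (parameters `α`, `k`) to the others' total
investment `xbar` at tax rate `t`. -/
def IsBestResponse (p r : ℝ → ℝ) (α k t xbar b : ℝ) : Prop :=
  b ∈ Icc (0:ℝ) 1 ∧
    ∀ y ∈ Icc (0:ℝ) 1,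
      y ^ α * effRate p r α k (y + xbar) t ≤ b ^ α * effRate p r α k (b + xbar) t

/-- Pure Nash equilibrium of the Fragile CPR game at tax rate `t`. -/
def IsPNE {ι : Type*} [Fintype ι] [DecidableEq ι] (p r : ℝ → ℝ) (α k : ι → ℝ)
    (t : ℝ) (x : ι → ℝ) : Prop :=
  (∀ i, x i ∈ Icc (0:ℝ) 1) ∧
    ∀ i, ∀ y ∈ Icc (0:ℝ) 1,
      y ^ α i * effRate p r (α i) (k i) (y + ∑ j ∈ Finset.univ.erase i, x j) t ≤
        x i ^ α i * effRate p r (α i) (k i) (x i + ∑ j ∈ Finset.univ.erase i, x j) t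

/-- `y` is the threshold `y^t_i` of a player, as defined in the paper for the
increasing and decreasing cases of the rate of return. -/
def IsThresholdY (p r : ℝ → ℝ) (α k t y : ℝ) : Prop :=
  (StrictMonoOn r (Icc (0:ℝ) 1) →
    ((∀ x ∈ St r t, effRate p r α k x t ≤ 0) → y = 0) ∧
    ((∃ x ∈ St r t, 0 < effRate p r α k x t) →
      ∃ z ∈ St r t, IsMaxOn (fun x => effRate p r α k x t) (St r t) z ∧
        y ∈ Ioo z 1 ∧ effRate p r α k y t = 0)) ∧
  (StrictAntiOn r (Icc (0:ℝ) 1) →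
    ((effRate p r α k 0 t ≤ 0) → y = 0) ∧
    ((0 < effRate p r α k 0 t) → y ∈ St r t ∧ effRate p r α k y t = 0))

/-- Pure Nash equilibrium under player-specific tax sensitivities `γ_i`
(all players have `α = 1` and common loss aversion `k`). -/
def IsPNEgamma {ι : Type*} [Fintype ι] [DecidableEq ι] (p r : ℝ → ℝ) (k t : ℝ)
    (γ : ι → ℝ) (x : ι → ℝ) : Prop :=
  (∀ i, x i ∈ Icc (0:ℝ) 1) ∧
    ∀ i, ∀ y ∈ Icc (0:ℝ) 1,
      y * effRate p r 1 k (y + ∑ j ∈ Finset.univ.erase i, x j) (γ i * t) ≤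
        x i * effRate p r 1 k (x i + ∑ j ∈ Finset.univ.erase i, x j) (γ i * t)

theorem concaveOn_closure {E : Type*} [TopologicalSpace E] [AddCommGroup E] [Module ℝ E]
    [IsTopologicalAddGroup E] [ContinuousConstSMul ℝ E] {s : Set E} {f : E → ℝ}
    (hf : ConcaveOn ℝ s f) (hcont : ContinuousOn f (closure s)) :
    ConcaveOn ℝ (closure s) f := by
  refine ⟨hf.1.closure, fun x hx y hy a b ha hb hab => ?_⟩
  have hxy : (x, y) ∈ closure (s ×ˢ s) := by rw [closure_prod_eq]; exact ⟨hx, hy⟩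
  refine le_on_closure (f := fun z : E × E => a • f z.1 + b • f z.2)
    (g := fun z : E × E => f (a • z.1 + b • z.2))
    (fun z hz => hf.2 hz.1 hz.2 ha hb hab) ?_ ?_ hxy <;> rw [closure_prod_eq]
  · exact ((hcont.comp continuousOn_fst fun z hz => hz.1).const_smul a).add
      ((hcont.comp continuousOn_snd fun z hz => hz.2).const_smul b)
  · exact hcont.comp (by fun_prop) fun z hz => hf.1.closure hz.1 hz.2 ha hb hab

theorem mul_le_mul_of_concaveOn {E : Type*} [AddCommMonoid E] [Module ℝ E] {s : Set E}
    {f : E → ℝ} (hf : ConcaveOn ℝ s f) {x y : E} (hx : x ∈ s) (hy : y ∈ s) (hfx : 0 ≤ f x)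
    (hfy : 0 ≤ f y) {a b : ℝ} (ha : 0 ≤ a) (hb : 0 ≤ b) (hab : a + b = 1) :
    f x * f y ≤ f (a • x + b • y) * f (b • x + a • y) := by
  have hxy : a * f x + b * f y ≤ f (a • x + b • y) := hf.2 hx hy ha hb hab
  have hyx : b * f x + a * f y ≤ f (b • x + a • y) := hf.2 hx hy hb ha (by rwa [add_comm])
  have hxy0 : 0 ≤ a * f x + b * f y := by positivity
  have hyx0 : 0 ≤ b * f x + a * f y := by positivity
  have hsq : (a + b) ^ 2 = 1 := by rw [hab, one_pow]
  calc f x * f y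
      ≤ (a + b) ^ 2 * (f x * f y) + a * b * (f x - f y) ^ 2 := by
        rw [hsq, one_mul]
        exact le_add_of_nonneg_right (by positivity)
    _ = (a * f x + b * f y) * (b * f x + a * f y) := by ring
    _ ≤ f (a • x + b • y) * f (b • x + a • y) := mul_le_mul hxy hyx hyx0 (hxy0.trans hxy)

theorem concaveOn_rpow_of_concaveOn {E : Type*} [AddCommMonoid E] [Module ℝ E] {s : Set E}
    {f : E → ℝ} (hf : ConcaveOn ℝ s f) (hf0 : ∀ x ∈ s, 0 ≤ f x) {α : ℝ} (hα0 : 0 ≤ α)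
    (hα1 : α ≤ 1) : ConcaveOn ℝ s (fun x => f x ^ α) := by
  refine ⟨hf.1, fun x hx y hy a b ha hb hab => ?_⟩
  calc a • f x ^ α + b • f y ^ α
      ≤ (a • f x + b • f y) ^ α :=
        (Real.concaveOn_rpow hα0 hα1).2 (hf0 x hx) (hf0 y hy) ha hb hab
    _ ≤ f (a • x + b • y) ^ α := by
        have hx0 := hf0 x hx
        have hy0 := hf0 y hy
        exact Real.rpow_le_rpow (by positivity) (hf.2 hx hy ha hb hab) hα0

theorem continuousOn_extendFrom_Ico {α β : Type*} [ConditionallyCompleteLinearOrder α]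
    [TopologicalSpace α] [OrderTopology α] [DenselyOrdered α]
    [ConditionallyCompleteLinearOrder β] [TopologicalSpace β] [OrderTopology β]
    {f : α → β} {a b : α} (hab : a < b) (hf : ContinuousOn f (Ico a b))
    (hmono : MonotoneOn f (Ico a b)) (hbdd : BddAbove (f '' Ico a b)) :
    ContinuousOn (extendFrom (Ico a b) f) (Icc a b) := by
  refine continuousOn_extendFrom (closure_Ico hab.ne).superset fun x hx => ?_
  rcases hx.2.lt_or_eq with hxb | rfl
  · exact ⟨f x, hf x ⟨hx.1, hxb⟩⟩
  · have hlim := MonotoneOn.tendsto_nhdsWithin_Ioo_left (nonempty_Ioo.2 hab)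
      (hmono.mono Ioo_subset_Ico_self) (hbdd.mono (image_mono Ioo_subset_Ico_self))
    exact ⟨_, hlim.mono_left (nhdsWithin_mono _ Ico_subset_Iio_self)⟩

theorem continuousOn_of_isClosed_of_compactSpace {Θ Y Z : Type*} [TopologicalSpace Θ]
    [TopologicalSpace Y] [CompactSpace Y] [TopologicalSpace Z] {G : Set (Θ × Y)}
    (hG : IsClosed G) {φ : Y → Z} (hφ : Continuous φ) {T : Set Θ} {X : Θ → Z}
    (hne : ∀ t ∈ T, ∃ y, (t, y) ∈ G) (hX : ∀ t ∈ T, ∀ y, (t, y) ∈ G → φ y = X t) :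
    ContinuousOn X T := by
  refine continuousOn_iff_isClosed.2 fun C hC =>
    ⟨Prod.fst '' (G ∩ (fun z => φ z.2) ⁻¹' C),
      isClosedMap_fst_of_compactSpace _ (hG.inter (hC.preimage (by fun_prop))), ?_⟩
  ext t
  constructor
  · rintro ⟨htC, ht⟩
    obtain ⟨y, hy⟩ := hne t ht
    exact ⟨⟨(t, y), ⟨hy, by rwa [mem_preimage, hX t ht y hy]⟩, rfl⟩, ht⟩
  · rintro ⟨⟨⟨_, y⟩, ⟨hy, hyC⟩, rfl⟩, ht⟩
    exact ⟨by rwa [mem_preimage, ← hX _ ht y hy], ht⟩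

/-- An equilibrium of the game in which player `i` who invests `y` out of a total `v` receives
`y ^ α i * f i v`, under the constraint that the total stays at most `1`. Deviations have to keep
the total strictly below `1`: this makes it an open condition, so that the notion passes to
limits. -/
def IsQuasiEquilibrium {ι : Type*} [Fintype ι] (α : ι → ℝ) (f : ι → ℝ → ℝ) (x : ι → ℝ) : Prop :=
  (∀ i, 0 ≤ x i) ∧ ∑ i, x i ≤ 1 ∧
    ∀ i y, 0 ≤ y → y + (∑ j, x j - x i) < 1 →
      y ^ α i * f i (y + (∑ j, x j - x i)) ≤ x i ^ α i * f i (∑ j, x j)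

namespace IsQuasiEquilibrium

variable {ι : Type*} [Fintype ι] {α : ι → ℝ} {f : ι → ℝ → ℝ} {x y : ι → ℝ}

theorem mem_Icc (hx : IsQuasiEquilibrium α f x) (i : ι) : x i ∈ Icc (0 : ℝ) 1 :=
  ⟨hx.1 i, (Finset.single_le_sum (fun j _ => hx.1 j) (Finset.mem_univ i)).trans hx.2.1⟩

theorem shift_le (hx : IsQuasiEquilibrium α f x) {i : ι} {d : ℝ} (hd : 0 ≤ x i + d)
    (hd1 : ∑ j, x j + d < 1) :
    (x i + d) ^ α i * f i (∑ j, x j + d) ≤ x i ^ α i * f i (∑ j, x j) := by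
  have htotal : x i + d + (∑ j, x j - x i) = ∑ j, x j + d := by ring
  have hstable := hx.2.2 i (x i + d) hd
  rw [htotal] at hstable
  exact hstable hd1

theorem rate_sum_nonneg (hx : IsQuasiEquilibrium α f x) {i : ι} (hα : α i ≠ 0) (hxi : 0 < x i) :
    0 ≤ f i (∑ j, x j) := by
  have hwithdraw : (x i + -x i) ^ α i * f i (∑ j, x j + -x i) ≤ x i ^ α i * f i (∑ j, x j) :=
    hx.shift_le (by simp) (by linarith [hx.2.1])
  rw [add_neg_cancel, Real.zero_rpow hα, zero_mul] at hwithdraw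
  exact nonneg_of_mul_nonneg_right hwithdraw (Real.rpow_pos_of_pos hxi _)

theorem exists_rate_pos_le_sum (hx : IsQuasiEquilibrium α f x) {i : ι} {z : ℝ}
    (hz : z ∈ Ico (0 : ℝ) 1) (hfz : 0 < f i z) :
    ∃ w ∈ Icc (0 : ℝ) (∑ j, x j), 0 < f i w := by
  rcases le_or_gt z (∑ j, x j) with hle | hgt
  · exact ⟨z, ⟨hz.1, hle⟩, hfz⟩
  · have hxi := hx.1 i
    have hmove : (x i + (z - ∑ j, x j)) ^ α i * f i (∑ j, x j + (z - ∑ j, x j)) ≤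
        x i ^ α i * f i (∑ j, x j) :=
      hx.shift_le (by linarith) (by linarith [hz.2])
    rw [add_sub_cancel] at hmove
    have hgain : 0 < (x i + (z - ∑ j, x j)) ^ α i * f i z :=
      mul_pos (Real.rpow_pos_of_pos (by linarith) _) hfz
    exact ⟨_, ⟨Finset.sum_nonneg fun j _ => hx.1 j, le_rfl⟩,
      pos_of_mul_pos_right (hgain.trans_le hmove) (Real.rpow_nonneg hxi _)⟩

end IsQuasiEquilibrium

theorem pos_of_concaveOn_Icc {f : ℝ → ℝ} {a b x : ℝ} (hf : ConcaveOn ℝ (Icc a b) f)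
    (hfa : 0 < f a) (hfb : 0 ≤ f b) (hx : x ∈ Ico a b) : 0 < f x := by
  by_contra! hfx
  have hax : a < x := lt_of_le_of_ne hx.1 fun h => (h ▸ hfa).not_ge hfx
  have hab : a ≤ b := hx.1.trans hx.2.le
  have hmem : x ∈ openSegment ℝ a b := by
    rw [openSegment_eq_Ioo (hax.trans hx.2)]
    exact ⟨hax, hx.2⟩
  have hfbx : f b < f x := hf.lt_right_of_left_lt (left_mem_Icc.2 hab) (right_mem_Icc.2 hab) hmem
    (hfx.trans_lt hfa)
  exact hfbx.not_ge (hfx.trans hfb)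

/-- Symmetric shifts of the two positions towards each other increase the product of the powers
`a ^ α * b ^ α` strictly, and do not decrease that of the values of `f`. -/
theorem lt_shift_or_lt_shift_of_concaveOn {f : ℝ → ℝ} {α a b A B ε : ℝ}
    (hf : ConcaveOn ℝ (Icc A B) f) (hfpos : ∀ v ∈ Ico A B, 0 < f v) (hfB : 0 ≤ f B)
    (hα : 0 < α) (ha : 0 ≤ a) (hε : 0 < ε) (hεab : ε < b - a) (hεAB : ε < B - A) :
    a ^ α * f A < (a + ε) ^ α * f (A + ε) ∨ b ^ α * f B < (b - ε) ^ α * f (B - ε) := by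
  by_contra! hno
  have hAB : A < B := by linarith
  have hb : 0 ≤ b := by linarith
  have hbε : 0 ≤ b - ε := by linarith
  have hfA : 0 < f A := hfpos A ⟨le_rfl, hAB⟩
  have hfAε : 0 < f (A + ε) := hfpos _ ⟨by linarith, by linarith⟩
  have hfBε : 0 < f (B - ε) := hfpos _ ⟨by linarith, by linarith⟩
  have hrates : f A * f B ≤ f (A + ε) * f (B - ε) := by
    have hD : B - A ≠ 0 := (sub_pos.2 hAB).ne'
    have hcomb := mul_le_mul_of_concaveOn hf (left_mem_Icc.2 hAB.le) (right_mem_Icc.2 hAB.le)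
      hfA.le hfB (a := 1 - ε / (B - A)) (b := ε / (B - A))
      (sub_nonneg.2 <| (div_le_one (by linarith)).2 hεAB.le)
      (div_nonneg hε.le (by linarith)) (by ring)
    convert hcomb using 3 <;> simp only [smul_eq_mul] <;> field_simp <;> ring
  have hpowers : a ^ α * b ^ α < (a + ε) ^ α * (b - ε) ^ α := by
    rw [← Real.mul_rpow ha hb, ← Real.mul_rpow (by positivity) hbε]
    exact Real.rpow_lt_rpow (by positivity) (by nlinarith) hα
  have hle : (a ^ α * b ^ α) * (f A * f B) < (a ^ α * b ^ α) * (f A * f B) :=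
    calc (a ^ α * b ^ α) * (f A * f B)
        ≤ (a ^ α * b ^ α) * (f (A + ε) * f (B - ε)) := by gcongr
      _ < ((a + ε) ^ α * (b - ε) ^ α) * (f (A + ε) * f (B - ε)) := by gcongr
      _ = ((a + ε) ^ α * f (A + ε)) * ((b - ε) ^ α * f (B - ε)) := by ring
      _ ≤ (a ^ α * f A) * (b ^ α * f B) := mul_le_mul hno.1 hno.2 (by positivity) (by positivity)
      _ = (a ^ α * b ^ α) * (f A * f B) := by ring
  exact hle.false

namespace IsQuasiEquilibrium

variable {ι : Type*} [Fintype ι] {α : ι → ℝ}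

theorem sum_le_sum {f : ι → ℝ → ℝ} (hα : ∀ i, 0 < α i)
    (hpos : ∀ i, ∃ z ∈ Ico (0 : ℝ) 1, 0 < f i z)
    (hconc : ∀ i, ∀ w ∈ Ico (0 : ℝ) 1, 0 < f i w → ConcaveOn ℝ (Icc w 1) (f i))
    {x y : ι → ℝ} (hx : IsQuasiEquilibrium α f x) (hy : IsQuasiEquilibrium α f y) :
    ∑ i, y i ≤ ∑ i, x i := by
  by_contra! hlt
  obtain ⟨i, -, hi⟩ : ∃ i ∈ Finset.univ, x i < y i := Finset.exists_lt_of_sum_lt hlt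
  have hxi := hx.1 i
  have hy1 := hy.2.1
  obtain ⟨z, hz, hfz⟩ := hpos i
  obtain ⟨w, hw, hfw⟩ := hx.exists_rate_pos_le_sum hz hfz
  have hfy : 0 ≤ f i (∑ j, y j) := hy.rate_sum_nonneg (hα i).ne' (hxi.trans_lt hi)
  have hconc_w : ConcaveOn ℝ (Icc w (∑ j, y j)) (f i) :=
    (hconc i w ⟨hw.1, by linarith [hw.2]⟩ hfw).subset (Icc_subset_Icc_right hy1) (convex_Icc _ _)
  have hfpos : ∀ v ∈ Ico (∑ j, x j) (∑ j, y j), 0 < f i v := fun v hv =>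
    pos_of_concaveOn_Icc hconc_w hfw hfy ⟨hw.2.trans hv.1, hv.2⟩
  obtain ⟨ε, hε, hεlt⟩ : ∃ ε, 0 < ε ∧ ε < min (y i - x i) (∑ j, y j - ∑ j, x j) :=
    exists_between (lt_min (by linarith) (by linarith))
  obtain ⟨hεi, hεsum⟩ := lt_min_iff.1 hεlt
  rcases lt_shift_or_lt_shift_of_concaveOn
      (hconc_w.subset (Icc_subset_Icc_left hw.2) (convex_Icc _ _)) hfpos hfy (hα i) hxi hε hεi
      hεsum with hgain | hgain
  · exact hgain.not_ge (hx.shift_le (by linarith) (by linarith))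
  · exact hgain.not_ge (hy.shift_le (d := -ε) (by linarith) (by linarith))

theorem isClosed_setOf {Θ : Type*} [TopologicalSpace Θ] {f : Θ → ι → ℝ → ℝ}
    (hα : ∀ i, 0 ≤ α i) (hf : ∀ i, Continuous fun z : Θ × ℝ => f z.1 i z.2) :
    IsClosed {z : Θ × (ι → ℝ) | IsQuasiEquilibrium α (f z.1) z.2} := by
  have hcoord (i : ι) : Continuous fun z : Θ × (ι → ℝ) => z.2 i := by fun_prop
  have hpow (i : ι) : Continuous fun z : Θ × (ι → ℝ) => z.2 i ^ α i :=
    (hcoord i).rpow_const fun _ => Or.inr (hα i)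
  have hrate (i : ι) {v : Θ × (ι → ℝ) → ℝ} (hv : Continuous v) :
      Continuous fun z => f z.1 i (v z) := (hf i).comp (continuous_fst.prodMk hv)
  simp only [IsQuasiEquilibrium, ofPred_and, ofPred_forall]
  refine .inter (isClosed_iInter fun i => isClosed_le (by fun_prop) (by fun_prop))
    (.inter (isClosed_le (by fun_prop) (by fun_prop)) (isClosed_iInter fun i =>
      isClosed_iInter fun y => isClosed_iInter fun _ => isClosed_imp
        (isOpen_lt (by fun_prop) (by fun_prop)) (isClosed_le ?_ ?_)))
  · exact continuous_const.mul (hrate i (by fun_prop))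
  · exact (hpow i).mul (hrate i (by fun_prop))

theorem continuousOn_sum {Θ : Type*} [TopologicalSpace Θ] {f : Θ → ι → ℝ → ℝ} {T : Set Θ}
    (hα : ∀ i, 0 < α i) (hf : ∀ i, Continuous fun z : Θ × ℝ => f z.1 i z.2)
    (hpos : ∀ t ∈ T, ∀ i, ∃ z ∈ Ico (0 : ℝ) 1, 0 < f t i z)
    (hconc : ∀ t ∈ T, ∀ i, ∀ w ∈ Ico (0 : ℝ) 1, 0 < f t i w → ConcaveOn ℝ (Icc w 1) (f t i))
    {X : Θ → ℝ} (hX : ∀ t ∈ T, ∃ x, IsQuasiEquilibrium α (f t) x ∧ ∑ i, x i = X t) :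
    ContinuousOn X T := by
  have hclosed := (isClosed_setOf (fun i => (hα i).le) hf).preimage
    (f := fun z : Θ × (ι → Icc (0 : ℝ) 1) => (z.1, fun i => (z.2 i : ℝ))) (by fun_prop)
  refine continuousOn_of_isClosed_of_compactSpace hclosed
    (φ := fun y => ∑ i, (y i : ℝ)) (by fun_prop) (fun t ht => ?_) fun t ht y hy => ?_
  · obtain ⟨x, hx, -⟩ := hX t ht
    exact ⟨fun i => ⟨x i, hx.mem_Icc i⟩, hx⟩
  · obtain ⟨x, hx, hxt⟩ := hX t ht
    rw [← hxt]
    exact le_antisymm (sum_le_sum hα (hpos t ht) (hconc t ht) hx hy)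
      (sum_le_sum hα (hpos t ht) (hconc t ht) hy hx)

end IsQuasiEquilibrium

section EffectiveRate

variable {p r : ℝ → ℝ} {α k t : ℝ}

/-- At `α = 0` the truncated powers would not vanish, as `0 ^ 0 = 1`. -/
theorem effRate_eq_max (hα : α ≠ 0) (x : ℝ) :
    effRate p r α k x t = max (r x - t) 0 ^ α * (1 - p x)
      - k * (max (t - r x) 0 ^ α * (1 - p x) + (1 + t) ^ α * p x) := by
  unfold effRate
  split_ifs with h
  · rw [max_eq_left h, max_eq_right (by linarith), Real.zero_rpow hα]
    ring
  · rw [max_eq_right (not_le.1 h).le, max_eq_left (by linarith), Real.zero_rpow hα]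
    ring

theorem continuousOn_effRate {s : Set ℝ} (hp : ContinuousOn p s) (hr : ContinuousOn r s)
    (hα : 0 < α) : ContinuousOn (fun z : ℝ × ℝ => effRate p r α k z.2 z.1) (univ ×ˢ s) := by
  have hp' : ContinuousOn (fun z : ℝ × ℝ => p z.2) (univ ×ˢ s) :=
    hp.comp continuousOn_snd fun _ hz => hz.2
  have hr' : ContinuousOn (fun z : ℝ × ℝ => r z.2) (univ ×ˢ s) :=
    hr.comp continuousOn_snd fun _ hz => hz.2
  have hpow {g : ℝ × ℝ → ℝ} (hg : ContinuousOn g (univ ×ˢ s)) :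
      ContinuousOn (fun z => g z ^ α) (univ ×ˢ s) := hg.rpow_const fun _ _ => Or.inr hα.le
  have hgain : ContinuousOn (fun z : ℝ × ℝ => max (r z.2 - z.1) 0 ^ α) (univ ×ˢ s) :=
    hpow ((hr'.sub continuousOn_fst).sup continuousOn_const)
  have hdeficit : ContinuousOn (fun z : ℝ × ℝ => max (z.1 - r z.2) 0 ^ α) (univ ×ˢ s) :=
    hpow ((continuousOn_fst.sub hr').sup continuousOn_const)
  have hsurvival : ContinuousOn (fun z : ℝ × ℝ => 1 - p z.2) (univ ×ˢ s) :=
    continuousOn_const.sub hp'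
  have hloss : ContinuousOn (fun z : ℝ × ℝ => (1 + z.1) ^ α) (univ ×ˢ s) :=
    hpow (continuousOn_const.add continuousOn_fst)
  simp only [effRate_eq_max hα.ne']
  exact (hgain.mul hsurvival).sub
    (continuousOn_const.mul ((hdeficit.mul hsurvival).add (hloss.mul hp')))

theorem effRate_le_effRate_of_le {x s : ℝ} (hp : p x ∈ Icc (0 : ℝ) 1) (hα : 0 ≤ α) (hk : 0 ≤ k)
    (ht : -1 ≤ t) (hts : t ≤ s) (hs : s ≤ r x) : effRate p r α k x s ≤ effRate p r α k x t := by
  have hp1 : 0 ≤ 1 - p x := sub_nonneg.2 hp.2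
  have hp0 : 0 ≤ p x := hp.1
  have hs0 : 0 ≤ r x - s := sub_nonneg.2 hs
  have ht0 : 0 ≤ 1 + t := by linarith
  rw [effRate, effRate, if_pos hs0, if_pos (by linarith)]
  gcongr

theorem le_rate_of_effRate_pos {x : ℝ} (hp : p x ∈ Icc (0 : ℝ) 1) (hk : 0 ≤ k) (ht : -1 ≤ t)
    (h : 0 < effRate p r α k x t) : t ≤ r x := by
  by_contra! hneg
  have hp1 : 0 ≤ 1 - p x := sub_nonneg.2 hp.2
  have hp0 : 0 ≤ p x := hp.1
  have hr0 : 0 ≤ t - r x := by linarith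
  have ht0 : 0 ≤ 1 + t := by linarith
  rw [effRate, if_neg (by linarith), neg_pos] at h
  exact h.not_ge (by positivity)

theorem effRate_neg_of_eq_one {x : ℝ} (hp : p x = 1) (hk : 0 < k) (ht : -1 < t) :
    effRate p r α k x t < 0 := by
  have hloss : 0 < k * (1 + t) ^ α := mul_pos hk (Real.rpow_pos_of_pos (by linarith) _)
  unfold effRate
  split_ifs <;> rw [hp] <;> linarith

theorem concaveOn_effRate {s : Set ℝ} (hp : ConvexOn ℝ s p) (hp_mono : MonotoneOn p s)
    (hp_le : ∀ x ∈ s, p x ≤ 1) (hr : ConcaveOn ℝ s r) (hr_mono : MonotoneOn r s)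
    (htr : ∀ x ∈ s, t ≤ r x) (hα : α ∈ Icc (0 : ℝ) 1) (hk : 0 ≤ k) (ht : -1 ≤ t) :
    ConcaveOn ℝ s (fun x => effRate p r α k x t) := by
  have hnet (x : ℝ) (hx : x ∈ s) : 0 ≤ r x - t := sub_nonneg.2 (htr x hx)
  have hgain : ConcaveOn ℝ s (fun x => (r x - t) ^ α) :=
    concaveOn_rpow_of_concaveOn (hr.sub (convexOn_const t hr.1)) hnet hα.1 hα.2
  have hgain_mono : MonotoneOn (fun x => (r x - t) ^ α) s := fun x hx y hy hxy =>
    Real.rpow_le_rpow (hnet x hx) (sub_le_sub_right (hr_mono hx hy hxy) t) hα.1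
  have hsurvival : ConcaveOn ℝ s (fun x => 1 - p x) := (concaveOn_const 1 hp.1).sub hp
  have hsurvival_anti : AntitoneOn (fun x => 1 - p x) s := fun x hx y hy hxy =>
    sub_le_sub_left (hp_mono hx hy hxy) 1
  have hexpected : ConcaveOn ℝ s ((fun x => (r x - t) ^ α) * fun x => 1 - p x) :=
    hgain.mul hsurvival (fun x hx => Real.rpow_nonneg (hnet x hx) α)
      (fun x hx => sub_nonneg.2 (hp_le x hx)) (hgain_mono.antivaryOn hsurvival_anti)
  have hloss : ConvexOn ℝ s (fun x => (k * (1 + t) ^ α) • p x) :=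
    hp.smul (mul_nonneg hk (Real.rpow_nonneg (by linarith) α))
  refine (hexpected.sub hloss).congr fun x hx => ?_
  simp only [Pi.sub_apply, Pi.mul_apply, smul_eq_mul, effRate, if_pos (hnet x hx)]

theorem exists_effRate_pos_of_lt_tbarI (hp : ∀ x, p x ∈ Icc (0 : ℝ) 1) (hα : 0 ≤ α) (hk : 0 ≤ k)
    (ht : 0 ≤ t) (hlt : t < tbarI p r α k) :
    ∃ x ∈ Icc (0 : ℝ) 1, 0 < effRate p r α k x t := by
  have hne : {t : ℝ | 0 ≤ t ∧ ∃ x ∈ St r t, 0 < effRate p r α k x t}.Nonempty := by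
    by_contra! hempty
    rw [tbarI, hempty, Real.sSup_empty] at hlt
    exact hlt.not_ge ht
  obtain ⟨s, ⟨-, x, hx, hpos⟩, hts⟩ := exists_lt_of_lt_csSup hne hlt
  have hsr : s ≤ r x := sub_nonneg.1 hx.2
  exact ⟨x, hx.1, hpos.trans_le
    (effRate_le_effRate_of_le (hp x) hα hk (by linarith) hts.le hsr)⟩

theorem iInf_tbarI_le_tbar {ι : Type*} [Fintype ι] [Nonempty ι] {α k : ι → ℝ}
    (hp : ∀ x, p x ∈ Icc (0 : ℝ) 1) (hr : BddAbove (r '' Icc (0 : ℝ) 1)) (hk : ∀ i, 0 ≤ k i) :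
    ⨅ i, tbarI p r (α i) (k i) ≤ tbar p r α k := by
  obtain ⟨i⟩ := ‹Nonempty ι›
  obtain ⟨M, hM⟩ := hr
  have hbdd : BddAbove {t : ℝ | 0 ≤ t ∧ ∃ i : ι, ∃ x ∈ Icc (0 : ℝ) 1,
      0 < effRate p r (α i) (k i) x t} := by
    refine ⟨M, ?_⟩
    rintro t ⟨ht, j, x, hx, hpos⟩
    exact (le_rate_of_effRate_pos (hp x) (hk j) (by linarith) hpos).trans
      (hM (mem_image_of_mem r hx))
  refine (ciInf_le (finite_range _).bddBelow i).trans
    (Real.sSup_le ?_ (Real.sSup_nonneg fun t ht => ht.1))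
  rintro t ⟨ht, x, hx, hpos⟩
  exact le_csSup hbdd ⟨ht, i, x, hx.1, hpos⟩

/-- The effective rate of return for the continuous extension of `p` from `[0, 1)` to `[0, 1]`,
which has no jump at `1`. Constant continuation on both sides of `[0, 1]` makes it continuous on
the line. -/
def jumpFreeRate (p r : ℝ → ℝ) (α k t x : ℝ) : ℝ :=
  effRate (extendFrom (Ico 0 1) p) r α k (projIcc 0 1 zero_le_one x) t

theorem jumpFreeRate_of_mem_Ico (hp : ContinuousOn p (Ico 0 1)) {x : ℝ} (hx : x ∈ Ico (0 : ℝ) 1) :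
    jumpFreeRate p r α k t x = effRate p r α k x t := by
  simp only [jumpFreeRate, effRate, projIcc_of_mem zero_le_one (Ico_subset_Icc_self hx),
    extendFrom_extends hp x hx]

theorem continuous_jumpFreeRate (hp : ContinuousOn p (Ico 0 1)) (hp_mono : MonotoneOn p (Ico 0 1))
    (hp_bdd : BddAbove (p '' Ico 0 1)) (hr : ContinuousOn r (Icc 0 1)) (hα : 0 < α) :
    Continuous fun z : ℝ × ℝ => jumpFreeRate p r α k z.1 z.2 :=
  (continuousOn_effRate (continuousOn_extendFrom_Ico one_pos hp hp_mono hp_bdd) hr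
    hα).comp_continuous
    (f := fun z : ℝ × ℝ => (z.1, (projIcc 0 1 zero_le_one z.2 : ℝ)))
    (continuous_fst.prodMk (continuous_subtype_val.comp
      ((continuous_projIcc (h := zero_le_one)).comp continuous_snd)))
    fun _ => ⟨mem_univ _, Subtype.coe_prop _⟩

theorem concaveOn_jumpFreeRate (hp : ConvexOn ℝ (Ico 0 1) p) (hp_cont : ContinuousOn p (Ico 0 1))
    (hp_mono : MonotoneOn p (Ico 0 1)) (hp_mem : ∀ x ∈ Ico (0 : ℝ) 1, p x ∈ Icc (0 : ℝ) 1)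
    (hr : ConcaveOn ℝ (Icc 0 1) r) (hr_cont : ContinuousOn r (Icc 0 1))
    (hr_mono : MonotoneOn r (Icc 0 1)) (hα : α ∈ Ioc (0 : ℝ) 1) (hk : 0 ≤ k) (ht : -1 ≤ t)
    {w : ℝ} (hw : w ∈ Ico (0 : ℝ) 1) (hpos : 0 < jumpFreeRate p r α k t w) :
    ConcaveOn ℝ (Icc w 1) (jumpFreeRate p r α k t) := by
  have hsub : Ico w 1 ⊆ Ico 0 1 := Ico_subset_Ico_left hw.1
  have hsub' : Ico w 1 ⊆ Icc 0 1 := hsub.trans Ico_subset_Icc_self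
  have htw : t ≤ r w := by
    rw [jumpFreeRate_of_mem_Ico hp_cont hw] at hpos
    exact le_rate_of_effRate_pos (hp_mem w hw) hk ht hpos
  have htr (x : ℝ) (hx : x ∈ Ico w 1) : t ≤ r x :=
    htw.trans (hr_mono (Ico_subset_Icc_self hw) (hsub' hx) hx.1)
  have hIco : ConcaveOn ℝ (Ico w 1) (jumpFreeRate p r α k t) :=
    (concaveOn_effRate (hp.subset hsub (convex_Ico w 1)) (hp_mono.mono hsub)
      (fun x hx => (hp_mem x (hsub hx)).2) (hr.subset hsub' (convex_Ico w 1))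
      (hr_mono.mono hsub') htr (Ioc_subset_Icc_self hα) hk ht).congr
      fun x hx => (jumpFreeRate_of_mem_Ico hp_cont (hsub hx)).symm
  have hcont : Continuous (jumpFreeRate p r α k t) :=
    (continuous_jumpFreeRate hp_cont hp_mono ⟨1, forall_mem_image.2 fun x hx => (hp_mem x hx).2⟩
      hr_cont hα.1).comp (Continuous.prodMk_right t)
  rw [← closure_Ico hw.2.ne]
  exact concaveOn_closure hIco hcont.continuousOn

end EffectiveRate

section Equilibrium

variable {ι : Type*} [Fintype ι] [DecidableEq ι] {p r : ℝ → ℝ} {α k : ι → ℝ} {t : ℝ} {x : ι → ℝ}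

theorem IsPNE.mul_effRate_le (hx : IsPNE p r α k t x) (i : ι) {y : ℝ} (hy : y ∈ Icc (0 : ℝ) 1) :
    y ^ α i * effRate p r (α i) (k i) (y + (∑ j, x j - x i)) t ≤
      x i ^ α i * effRate p r (α i) (k i) (∑ j, x j) t := by
  have hopt := hx.2 i y hy
  rwa [Finset.sum_erase_eq_sub (Finset.mem_univ i), add_sub_cancel] at hopt

theorem IsPNE.sum_lt_one (hp : ∀ x, 1 ≤ x → p x = 1) (hα : ∀ i, α i ≠ 0) (hk : ∀ i, 0 < k i)
    (ht : -1 < t) (hx : IsPNE p r α k t x) : ∑ i, x i < 1 := by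
  by_contra! hsum
  obtain ⟨i, -, hi⟩ : ∃ i ∈ Finset.univ, 0 < x i :=
    Finset.exists_lt_of_sum_lt (by rw [Finset.sum_const_zero]; exact one_pos.trans_le hsum)
  have hwithdraw := hx.mul_effRate_le i (left_mem_Icc.2 zero_le_one)
  rw [Real.zero_rpow (hα i), zero_mul] at hwithdraw
  exact hwithdraw.not_gt (mul_neg_of_pos_of_neg (Real.rpow_pos_of_pos hi _)
    (effRate_neg_of_eq_one (hp _ hsum) (hk i) ht))

theorem IsPNE.isQuasiEquilibrium (hp : ContinuousOn p (Ico 0 1)) (hp_one : ∀ x, 1 ≤ x → p x = 1)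
    (hα : ∀ i, α i ≠ 0) (hk : ∀ i, 0 < k i) (ht : -1 < t) (hx : IsPNE p r α k t x) :
    IsQuasiEquilibrium α (fun i => jumpFreeRate p r (α i) (k i) t) x := by
  have hnonneg (i : ι) : 0 ≤ x i := (hx.1 i).1
  have hsum : ∑ i, x i < 1 := hx.sum_lt_one hp_one hα hk ht
  refine ⟨hnonneg, hsum.le, fun i y hy hy1 => ?_⟩
  have hothers : x i ≤ ∑ j, x j :=
    Finset.single_le_sum (fun j _ => hnonneg j) (Finset.mem_univ i)
  beta_reduce
  rw [jumpFreeRate_of_mem_Ico hp ⟨by linarith, hy1⟩,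
    jumpFreeRate_of_mem_Ico hp ⟨Finset.sum_nonneg fun j _ => hnonneg j, hsum⟩]
  exact hx.mul_effRate_le i ⟨hy, by linarith⟩

end Equilibrium

theorem statement16_general {ι : Type*} [Fintype ι] [DecidableEq ι] {p r : ℝ → ℝ} {α k : ι → ℝ}
    (hp : ConvexOn ℝ (Ico 0 1) p) (hp_mono : MonotoneOn p (Ico 0 1))
    (hp_cont : ContinuousOn p (Ico 0 1)) (hp_mem : ∀ x ∈ Ico (0 : ℝ) 1, p x ∈ Icc (0 : ℝ) 1)
    (hp_one : ∀ x, 1 ≤ x → p x = 1) (hr : ConcaveOn ℝ (Icc 0 1) r)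
    (hr_mono : MonotoneOn r (Icc 0 1)) (hr_cont : ContinuousOn r (Icc 0 1))
    (hα : ∀ i, α i ∈ Ioc (0 : ℝ) 1) (hk : ∀ i, 0 < k i) {T : Set ℝ} (hT : ∀ t ∈ T, -1 < t)
    (hpos : ∀ t ∈ T, ∀ i, ∃ x ∈ Icc (0 : ℝ) 1, 0 < effRate p r (α i) (k i) x t) {X : ℝ → ℝ}
    (hX : ∀ t ∈ T, ∃ x : ι → ℝ, IsPNE p r α k t x ∧ ∑ i, x i = X t) :
    ContinuousOn X T := by
  refine IsQuasiEquilibrium.continuousOn_sum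
    (f := fun t i => jumpFreeRate p r (α i) (k i) t) (fun i => (hα i).1)
    (fun i => continuous_jumpFreeRate hp_cont hp_mono
      ⟨1, forall_mem_image.2 fun x hx => (hp_mem x hx).2⟩ hr_cont (hα i).1)
    (fun t ht i => ?_)
    (fun t ht i w => concaveOn_jumpFreeRate hp hp_cont hp_mono hp_mem hr hr_cont hr_mono (hα i)
      (hk i).le (hT t ht).le)
    (fun t ht => ?_)
  · obtain ⟨z, hz, hfz⟩ := hpos t ht i
    have hz1 : z < 1 := by
      by_contra! h1
      exact (effRate_neg_of_eq_one (hp_one z h1) (hk i) (hT t ht)).not_gt hfz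
    exact ⟨z, ⟨hz.1, hz1⟩, by rwa [jumpFreeRate_of_mem_Ico hp_cont ⟨hz.1, hz1⟩]⟩
  · obtain ⟨x, hx, hsum⟩ := hX t ht
    exact ⟨x, hx.isQuasiEquilibrium hp_cont hp_one (fun i => (hα i).1.ne') hk (hT t ht), hsum⟩

/-- for a strictly increasing rate of return, the utilization map
`t ↦ x^t_NE` is continuous on `[0, min_i t̄_i)`, where
`t̄_i = sup{t ≥ 0 : max_{x ∈ S_t} f_i(x,t) > 0}`. -/
theorem statement16 {ι : Type*} [Fintype ι] [DecidableEq ι] [Nonempty ι]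
    (p r : ℝ → ℝ) (α k : ι → ℝ)
    (hp : FailureProb p) (hr : RateOfReturn r)
    (hinc : StrictMonoOn r (Icc (0:ℝ) 1))
    (hα : ∀ i, α i ∈ Ioc (0:ℝ) 1) (hk : ∀ i, 0 < k i)
    (htbar : 0 < tbar p r α k)
    (X : ℝ → ℝ)
    (hX : ∀ t ∈ Ico (0:ℝ) (tbar p r α k),
      ∃ x : ι → ℝ, IsPNE p r α k t x ∧ ∑ i, x i = X t) :
    ContinuousOn X (Ico (0:ℝ) (⨅ i, tbarI p r (α i) (k i))) := by
  exact statement16_general hp.convexOn hp.strictMonoOn.monotoneOn hp.contDiffOn.continuousOn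
    (fun x _ => hp.mem_unit x) hp.eq_one hr.concaveOn hinc.monotoneOn hr.contDiffOn.continuousOn
    hα hk (fun t ht => by linarith [ht.1])
    (fun t ht i => exists_effRate_pos_of_lt_tbarI hp.mem_unit (hα i).1.le (hk i).le ht.1
      (ht.2.trans_le (ciInf_le (finite_range _).bddBelow i)))
    fun t ht => hX t ⟨ht.1, ht.2.trans_le (iInf_tbarI_le_tbar hp.mem_unit
      (isCompact_Icc.bddAbove_image hr.contDiffOn.continuousOn) fun i => (hk i).le)⟩
end
end

section
/- Consider a Fragile CPR game with strictly decreasing rate of return r and player-specific prospect-theoretic preferences. Then for every utilization level x* ∈ [0, x^0_NE] there exists a tax rate t ∈ [0, t̄] such that x^t_NE = x*; in particular, there exists a tax rate t* with x^{t*}_NE = x^0_OPT. Moreover, for any x* > x^0_NE there does not exist a positive tax rate t for which x^t_NE = x*. -/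
/-!
Where the resource may survive and `t < r x`, a player's effective rate of return factors as
`f = F * N` with `F > 0` the contribution of gains and `N` one minus the weighted odds of failure;
its derivative in the utilization is `f' = -F * D` with `D > 0`. As `r` is nonincreasing and concave
and `p` is increasing and convex, `N` decreases and `D` increases jointly in `(x, t)`. Hence the
marginal payoff of an investment `b`, which has the sign of `α * N - b * D`, decreases in `b`, `x`
and `t`, and the first-order condition `b = α * N / D` characterizes positive best responses.

A profile from which no player gains by lowering her investment has nonnegative marginal payoffs, so
by this monotonicity its total cannot exceed that of an equilibrium at a lower tax. This covers
equilibria at higher taxes and also the social optimum, since lowering one investment does not hurt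
the other players. Conversely, fix a total `X > 0` not exceeding the untaxed one: the shares
`max (α * N / D) 0` at `X` add up to at least `X` at `t = 0`, depend continuously on `t` and vanish
as `t` approaches `r X`, so they add up to exactly `X` at some intermediate tax, where they form an
equilibrium. The total `0` is reached at the tax `tbar`.
-/

open Real Set

noncomputable section

section

open Filter Topology

lemma sub_mul_nonpos_of_isMaxOn {f : ℝ → ℝ} {f' a b : ℝ} {s : Set ℝ} (hmax : IsMaxOn f s a)
    (hs : segment ℝ a b ⊆ s) (hf : HasDerivAt f f' a) : (b - a) * f' ≤ 0 := by
  have h := hmax.localize.hasFDerivWithinAt_nonpos hf.hasDerivWithinAt.hasFDerivWithinAt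
    (sub_mem_posTangentConeAt_of_segment_subset hs)
  simpa using h

/-! ### Failure probability and rate of return -/

section FailureProb

variable {p : ℝ → ℝ}

lemma FailureProb.lt_one (hp : FailureProb p) {x : ℝ} (hx : x ∈ Ico (0 : ℝ) 1) : p x < 1 :=
  have hmid : (x + 1) / 2 ∈ Ico (0 : ℝ) 1 := ⟨by linarith [hx.1], by linarith [hx.2]⟩
  (hp.strictMonoOn hx hmid (by linarith [hx.2])).trans_le (hp.mem_unit _).2

lemma FailureProb.pos (hp : FailureProb p) {x : ℝ} (hx : x ∈ Ioo (0 : ℝ) 1) : 0 < p x :=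
  (hp.mem_unit 0).1.trans_lt (hp.strictMonoOn ⟨le_rfl, one_pos⟩ ⟨hx.1.le, hx.2⟩ hx.1)

lemma FailureProb.differentiableAt (hp : FailureProb p) {x : ℝ} (hx : x ∈ Ioo (0 : ℝ) 1) :
    DifferentiableAt ℝ p x :=
  (hp.contDiffOn.differentiableOn one_ne_zero).differentiableAt (Ico_mem_nhds hx.1 hx.2)

lemma FailureProb.monotoneOn_deriv (hp : FailureProb p) :
    MonotoneOn (deriv p) (Ioo (0 : ℝ) 1) :=
  (hp.convexOn.subset Ioo_subset_Ico_self (convex_Ioo 0 1)).monotoneOn_deriv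
    fun _ hx => hp.differentiableAt hx

lemma FailureProb.deriv_pos (hp : FailureProb p) {x : ℝ} (hx : x ∈ Ioo (0 : ℝ) 1) :
    0 < deriv p x := by
  have h0 : (0 : ℝ) ∈ Ico (0 : ℝ) 1 := ⟨le_rfl, one_pos⟩
  have hx' := Ioo_subset_Ico_self hx
  calc 0 < slope p 0 x := by
        rw [slope_def_field]
        exact div_pos (sub_pos.2 (hp.strictMonoOn h0 hx' hx.1)) (sub_pos.2 hx.1)
    _ ≤ deriv p x := hp.convexOn.slope_le_deriv h0 hx' hx.1 (hp.differentiableAt hx)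

/-- The odds of failure at total investment `x`, meaningful for `x < 1`. -/
def failureOdds (p : ℝ → ℝ) (x : ℝ) : ℝ := p x / (1 - p x)

/-- The hazard rate of failure at total investment `x`, meaningful for `0 < x < 1`. -/
def hazardRate (p : ℝ → ℝ) (x : ℝ) : ℝ := deriv p x / (1 - p x)

lemma FailureProb.failureOdds_nonneg (hp : FailureProb p) (x : ℝ) : 0 ≤ failureOdds p x :=
  div_nonneg (hp.mem_unit x).1 (sub_nonneg.2 (hp.mem_unit x).2)

lemma FailureProb.monotoneOn_failureOdds (hp : FailureProb p) :
    MonotoneOn (failureOdds p) (Ico (0 : ℝ) 1) := fun x hx y hy hxy =>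
  have hpxy := hp.strictMonoOn.monotoneOn hx hy hxy
  div_le_div₀ (hp.mem_unit y).1 hpxy (sub_pos.2 (hp.lt_one hy)) (by linarith)

lemma FailureProb.hazardRate_pos (hp : FailureProb p) {x : ℝ} (hx : x ∈ Ioo (0 : ℝ) 1) :
    0 < hazardRate p x :=
  div_pos (hp.deriv_pos hx) (sub_pos.2 (hp.lt_one (Ioo_subset_Ico_self hx)))

lemma FailureProb.monotoneOn_hazardRate (hp : FailureProb p) :
    MonotoneOn (hazardRate p) (Ioo (0 : ℝ) 1) := fun x hx y hy hxy =>
  have hx' := Ioo_subset_Ico_self hx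
  have hy' := Ioo_subset_Ico_self hy
  have hpxy := hp.strictMonoOn.monotoneOn hx' hy' hxy
  div_le_div₀ (hp.deriv_pos hy).le (hp.monotoneOn_deriv hx hy hxy)
    (sub_pos.2 (hp.lt_one hy')) (by linarith)

end FailureProb

/-- A rate of return that does not increase with the total investment. Nothing is required at
`x ≥ 1`, where the resource fails and the value of `r` is irrelevant. -/
structure NonincreasingReturn (r : ℝ → ℝ) : Prop where
  concaveOn : ConcaveOn ℝ (Ico (0 : ℝ) 1) r
  pos : ∀ x ∈ Ico (0 : ℝ) 1, 0 < r x
  antitoneOn : AntitoneOn r (Ico (0 : ℝ) 1)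
  differentiableOn : DifferentiableOn ℝ r (Ico (0 : ℝ) 1)

lemma RateOfReturn.nonincreasingReturn {r : ℝ → ℝ} (hr : RateOfReturn r)
    (hanti : AntitoneOn r (Icc (0 : ℝ) 1)) : NonincreasingReturn r where
  concaveOn := hr.concaveOn.subset Ico_subset_Icc_self (convex_Ico 0 1)
  pos x hx := hr.pos x (Ico_subset_Icc_self hx)
  antitoneOn := hanti.mono Ico_subset_Icc_self
  differentiableOn := (hr.contDiffOn.differentiableOn one_ne_zero).mono Ico_subset_Icc_self

/-- The region of total investments `x` and tax rates `t` in which the resource may survive and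
the net rate of return `r x - t` is positive. -/
structure PositiveMargin (r : ℝ → ℝ) (x t : ℝ) : Prop where
  nonneg : 0 ≤ x
  lt_one : x < 1
  tax_nonneg : 0 ≤ t
  tax_lt : t < r x

section Return

variable {r : ℝ → ℝ} {x y s t : ℝ}

lemma PositiveMargin.mem_Ico (h : PositiveMargin r x t) : x ∈ Ico (0 : ℝ) 1 := ⟨h.nonneg, h.lt_one⟩

lemma PositiveMargin.sub_pos (h : PositiveMargin r x t) : 0 < r x - t := _root_.sub_pos.2 h.tax_lt

lemma NonincreasingReturn.sub_le_sub (hr : NonincreasingReturn r) (hx : 0 ≤ x) (hxy : x ≤ y)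
    (hy : y < 1) (hst : s ≤ t) : r y - t ≤ r x - s :=
  _root_.sub_le_sub (hr.antitoneOn ⟨hx, hxy.trans_lt hy⟩ ⟨hx.trans hxy, hy⟩ hxy) hst

lemma PositiveMargin.of_le (h : PositiveMargin r y t) (hr : NonincreasingReturn r) (hx : 0 ≤ x)
    (hxy : x ≤ y) (hs : 0 ≤ s) (hst : s ≤ t) : PositiveMargin r x s where
  nonneg := hx
  lt_one := hxy.trans_lt h.lt_one
  tax_nonneg := hs
  tax_lt := by linarith [hr.sub_le_sub hx hxy h.lt_one hst, h.tax_lt]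

lemma NonincreasingReturn.differentiableAt (hr : NonincreasingReturn r)
    (hx : x ∈ Ioo (0 : ℝ) 1) : DifferentiableAt ℝ r x :=
  hr.differentiableOn.differentiableAt (Ico_mem_nhds hx.1 hx.2)

lemma NonincreasingReturn.antitoneOn_deriv (hr : NonincreasingReturn r) :
    AntitoneOn (deriv r) (Ioo (0 : ℝ) 1) :=
  (hr.concaveOn.subset Ioo_subset_Ico_self (convex_Ioo 0 1)).antitoneOn_deriv
    fun _ hx => hr.differentiableAt hx

lemma NonincreasingReturn.deriv_nonpos (hr : NonincreasingReturn r) (hx : x ∈ Ioo (0 : ℝ) 1) :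
    deriv r x ≤ 0 := by
  rw [← derivWithin_of_mem_nhds (Ico_mem_nhds hx.1 hx.2)]
  exact hr.antitoneOn.derivWithin_nonpos

end Return

/-! ### The effective rate of return -/

/-- The weight of a loss relative to a gain for a player with sensitivity `α` and loss aversion
`k`, meaningful when `t < r x`. -/
def lossWeight (r : ℝ → ℝ) (α k x t : ℝ) : ℝ := k * ((1 + t) / (r x - t)) ^ α

/-- The contribution of gains to the effective rate of return, meaningful when `t ≤ r x`. -/
def gainTerm (p r : ℝ → ℝ) (α x t : ℝ) : ℝ := (r x - t) ^ α * (1 - p x)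

/-- The ratio of the effective rate of return to `gainTerm`, in the region `PositiveMargin`. -/
def normalizedRate (p r : ℝ → ℝ) (α k x t : ℝ) : ℝ := 1 - lossWeight r α k x t * failureOdds p x

/-- The ratio of `-effRateDx` to `gainTerm`, in the region `PositiveMargin` with `0 < x`. -/
def normalizedDecay (p r : ℝ → ℝ) (α k x t : ℝ) : ℝ :=
  α * (-deriv r x / (r x - t)) + (1 + lossWeight r α k x t) * hazardRate p x

section EffRate

variable {p r : ℝ → ℝ} {α k x y s t : ℝ}

lemma effRate_of_tax_le (h : t ≤ r x) :
    effRate p r α k x t = (r x - t) ^ α * (1 - p x) - k * (1 + t) ^ α * p x :=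
  if_pos (sub_nonneg.2 h)

lemma effRate_of_one_le (hp : FailureProb p) (hx : 1 ≤ x) :
    effRate p r α k x t = -(k * (1 + t) ^ α) := by
  simp [effRate, hp.eq_one x hx]

lemma effRate_neg_of_one_le (hp : FailureProb p) (hk : 0 < k) (ht : 0 ≤ t) (hx : 1 ≤ x) :
    effRate p r α k x t < 0 := by
  rw [effRate_of_one_le hp hx, neg_lt_zero]
  positivity

lemma effRate_neg_of_lt_tax (hp : FailureProb p) (hk : 0 < k) (ht : 0 ≤ t) (h : r x < t) :
    effRate p r α k x t < 0 := by
  have hloss : 0 < (t - r x) ^ α := rpow_pos_of_pos (sub_pos.2 h) α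
  have htotal : 0 < (1 + t) ^ α := by positivity
  obtain ⟨hp0, hp1⟩ := hp.mem_unit x
  have hsum : 0 < (t - r x) ^ α * (1 - p x) + (1 + t) ^ α * p x := by
    rcases hp1.lt_or_eq with hlt | heq
    · have := mul_pos hloss (sub_pos.2 hlt)
      positivity
    · simpa [heq] using htotal
  rw [effRate, if_neg (by linarith), neg_lt_zero]
  exact mul_pos hk hsum

lemma lt_one_and_tax_le_of_effRate_nonneg (hp : FailureProb p) (hk : 0 < k) (ht : 0 ≤ t)
    (h : 0 ≤ effRate p r α k x t) : x < 1 ∧ t ≤ r x := by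
  constructor <;> by_contra! hx
  · exact h.not_gt (effRate_neg_of_one_le hp hk ht hx)
  · exact h.not_gt (effRate_neg_of_lt_tax hp hk ht hx)

lemma effRate_lt_effRate (hp : FailureProb p) (hr : NonincreasingReturn r) (hα : 0 < α)
    (hk : 0 < k) (hx : 0 ≤ x) (hxy : x < y) (hy : y < 1) (ht : 0 ≤ t) (htr : t ≤ r y) :
    effRate p r α k y t < effRate p r α k x t := by
  have hmargin : r y - t ≤ r x - t := hr.sub_le_sub hx hxy.le hy le_rfl
  have hpxy : p x < p y := hp.strictMonoOn ⟨hx, hxy.trans hy⟩ ⟨hx.trans hxy.le, hy⟩ hxy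
  rw [effRate_of_tax_le htr, effRate_of_tax_le (by linarith)]
  have hgain : (r y - t) ^ α * (1 - p y) ≤ (r x - t) ^ α * (1 - p x) :=
    mul_le_mul (rpow_le_rpow (sub_nonneg.2 htr) hmargin hα.le) (by linarith)
      (sub_nonneg.2 (hp.mem_unit y).2) (rpow_nonneg (by linarith) α)
  have hloss : k * (1 + t) ^ α * p x < k * (1 + t) ^ α * p y := by gcongr
  linarith

/-- Beyond `x = 1` the rate is constant, and it is the worst possible one. -/
lemma antitoneOn_effRate_zero (hp : FailureProb p) (hr : NonincreasingReturn r) (hα : 0 < α)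
    (hk : 0 < k) : AntitoneOn (fun x => effRate p r α k x 0) (Ici 0) := by
  intro x hx y _ hxy
  rcases hxy.eq_or_lt with rfl | hlt
  · rfl
  rcases lt_or_ge y 1 with hy | hy
  · exact (effRate_lt_effRate hp hr hα hk hx hlt hy le_rfl
      (hr.pos y ⟨le_trans hx hxy, hy⟩).le).le
  beta_reduce
  rw [effRate_of_one_le hp hy]
  rcases lt_or_ge x 1 with hx1 | hx1
  · have hrx := hr.pos x ⟨hx, hx1⟩
    have hp1 := (hp.mem_unit x).2
    have hgain : 0 ≤ (r x - 0) ^ α * (1 - p x) :=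
      mul_nonneg (rpow_nonneg (by linarith) α) (sub_nonneg.2 hp1)
    have hloss : k * (1 + 0) ^ α * p x ≤ k * (1 + 0) ^ α :=
      mul_le_of_le_one_right (by positivity) hp1
    rw [effRate_of_tax_le hrx.le]
    linarith
  · rw [effRate_of_one_le hp hx1]

lemma gainTerm_pos (hp : FailureProb p) (h : PositiveMargin r x t) : 0 < gainTerm p r α x t :=
  mul_pos (rpow_pos_of_pos h.sub_pos α) (sub_pos.2 (hp.lt_one h.mem_Ico))

lemma effRate_eq_gainTerm_mul (hp : FailureProb p) (h : PositiveMargin r x t) :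
    effRate p r α k x t = gainTerm p r α x t * normalizedRate p r α k x t := by
  have hsurv : 0 < 1 - p x := sub_pos.2 (hp.lt_one h.mem_Ico)
  have hmargin : 0 < (r x - t) ^ α := rpow_pos_of_pos h.sub_pos α
  rw [effRate_of_tax_le h.tax_lt.le, gainTerm, normalizedRate, lossWeight, failureOdds,
    div_rpow (by linarith [h.tax_nonneg]) h.sub_pos.le]
  field_simp

lemma PositiveMargin.effRate_pos_iff (h : PositiveMargin r x t) (hp : FailureProb p) :
    0 < effRate p r α k x t ↔ 0 < normalizedRate p r α k x t := by
  rw [effRate_eq_gainTerm_mul hp h, mul_pos_iff_of_pos_left (gainTerm_pos hp h)]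

lemma positiveMargin_of_effRate_pos (hp : FailureProb p) (hα : 0 < α) (hk : 0 < k) (hx : 0 ≤ x)
    (ht : 0 ≤ t) (h : 0 < effRate p r α k x t) : PositiveMargin r x t := by
  obtain ⟨hx1, htr⟩ := lt_one_and_tax_le_of_effRate_nonneg hp hk ht h.le
  refine ⟨hx, hx1, ht, htr.lt_of_ne fun heq => h.not_ge ?_⟩
  rw [effRate_of_tax_le htr, ← heq, sub_self, zero_rpow hα.ne', zero_mul, zero_sub, neg_nonpos]
  have := (hp.mem_unit x).1
  positivity

lemma lossWeight_nonneg (hk : 0 < k) (h : PositiveMargin r x t) : 0 ≤ lossWeight r α k x t := by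
  have := h.sub_pos
  have := h.tax_nonneg
  rw [lossWeight]
  positivity

lemma lossWeight_le_lossWeight (hr : NonincreasingReturn r) (hα : 0 < α) (hk : 0 < k) (hx : 0 ≤ x)
    (hxy : x ≤ y) (hs : 0 ≤ s) (hst : s ≤ t) (h : PositiveMargin r y t) :
    lossWeight r α k x s ≤ lossWeight r α k y t := by
  have hx' := h.of_le hr hx hxy hs hst
  have hratio : (1 + s) / (r x - s) ≤ (1 + t) / (r y - t) :=
    div_le_div₀ (by linarith) (by linarith) h.sub_pos (hr.sub_le_sub hx hxy h.lt_one hst)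
  exact mul_le_mul_of_nonneg_left
    (rpow_le_rpow (div_nonneg (by linarith) hx'.sub_pos.le) hratio hα.le) hk.le

lemma normalizedRate_le_normalizedRate (hp : FailureProb p) (hr : NonincreasingReturn r)
    (hα : 0 < α) (hk : 0 < k) (hx : 0 ≤ x) (hxy : x ≤ y) (hs : 0 ≤ s) (hst : s ≤ t)
    (h : PositiveMargin r y t) : normalizedRate p r α k y t ≤ normalizedRate p r α k x s :=
  have hx' := h.of_le hr hx hxy hs hst
  sub_le_sub_left (mul_le_mul (lossWeight_le_lossWeight hr hα hk hx hxy hs hst h)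
    (hp.monotoneOn_failureOdds hx'.mem_Ico h.mem_Ico hxy) (hp.failureOdds_nonneg x)
    (lossWeight_nonneg hk h)) 1

lemma normalizedDecay_pos (hp : FailureProb p) (hr : NonincreasingReturn r) (hα : 0 < α)
    (hk : 0 < k) (hx : 0 < x) (h : PositiveMargin r x t) : 0 < normalizedDecay p r α k x t := by
  have hx' : x ∈ Ioo (0 : ℝ) 1 := ⟨hx, h.lt_one⟩
  have hdecline : 0 ≤ -deriv r x / (r x - t) :=
    div_nonneg (neg_nonneg.2 (hr.deriv_nonpos hx')) h.sub_pos.le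
  have hhazard := hp.hazardRate_pos hx'
  have hweight := lossWeight_nonneg (α := α) hk h
  rw [normalizedDecay]
  positivity

lemma normalizedDecay_le_normalizedDecay (hp : FailureProb p) (hr : NonincreasingReturn r)
    (hα : 0 < α) (hk : 0 < k) (hx : 0 < x) (hxy : x ≤ y) (hs : 0 ≤ s) (hst : s ≤ t)
    (h : PositiveMargin r y t) : normalizedDecay p r α k x s ≤ normalizedDecay p r α k y t := by
  have hx' : x ∈ Ioo (0 : ℝ) 1 := ⟨hx, hxy.trans_lt h.lt_one⟩
  have hy' : y ∈ Ioo (0 : ℝ) 1 := ⟨hx.trans_le hxy, h.lt_one⟩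
  have hdecline : -deriv r x / (r x - s) ≤ -deriv r y / (r y - t) :=
    div_le_div₀ (neg_nonneg.2 (hr.deriv_nonpos hy')) (neg_le_neg (hr.antitoneOn_deriv hx' hy' hxy))
      h.sub_pos (hr.sub_le_sub hx.le hxy h.lt_one hst)
  have hweight := lossWeight_le_lossWeight hr hα hk hx.le hxy hs hst h
  have hweight_nonneg := lossWeight_nonneg (α := α) hk h
  have hhazard := hp.monotoneOn_hazardRate hx' hy' hxy
  have hhazard_nonneg := (hp.hazardRate_pos hx').le
  rw [normalizedDecay, normalizedDecay]
  gcongr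

lemma effRate_pos_of_le (hp : FailureProb p) (hr : NonincreasingReturn r) (hα : 0 < α)
    (hk : 0 < k) (hx : 0 ≤ x) (hxy : x ≤ y) (hs : 0 ≤ s) (hst : s ≤ t)
    (h : 0 < effRate p r α k y t) : 0 < effRate p r α k x s := by
  have hy := positiveMargin_of_effRate_pos hp hα hk (hx.trans hxy) (hs.trans hst) h
  rw [(hy.of_le hr hx hxy hs hst).effRate_pos_iff hp]
  exact ((hy.effRate_pos_iff hp).1 h).trans_le
    (normalizedRate_le_normalizedRate hp hr hα hk hx hxy hs hst hy)

lemma hasDerivAt_effRate (hp : FailureProb p) (hr : NonincreasingReturn r) (hx : 0 < x)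
    (h : PositiveMargin r x t) :
    HasDerivAt (fun z => effRate p r α k z t)
      (-(gainTerm p r α x t * normalizedDecay p r α k x t)) x := by
  have hdr := (hr.differentiableAt ⟨hx, h.lt_one⟩).hasDerivAt
  have hdp := (hp.differentiableAt ⟨hx, h.lt_one⟩).hasDerivAt
  have hgain := ((hdr.sub_const t).rpow_const (p := α) (Or.inl h.sub_pos.ne')).mul (hdp.const_sub 1)
  have hloss := hdp.const_mul (k * (1 + t) ^ α)
  have hformula : (fun z => effRate p r α k z t) =ᶠ[𝓝 x]
      fun z => (r z - t) ^ α * (1 - p z) - k * (1 + t) ^ α * p z := by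
    filter_upwards [hdr.continuousAt.eventually_const_lt h.tax_lt] with z hz
    exact effRate_of_tax_le hz.le
  refine ((hgain.sub hloss).congr_of_eventuallyEq hformula).congr_deriv ?_
  have hsurv : 0 < 1 - p x := sub_pos.2 (hp.lt_one h.mem_Ico)
  have hmargin : 0 < r x - t := h.sub_pos
  have : 0 < (r x - t) ^ α := rpow_pos_of_pos hmargin α
  rw [gainTerm, normalizedDecay, lossWeight, hazardRate,
    div_rpow (by linarith [h.tax_nonneg]) hmargin.le, rpow_sub_one hmargin.ne']
  field_simp
  ring

/-- At `x = 0` only continuity from the right is available, as `p` and `r` may jump below `0`. -/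
lemma exists_gt_effRate_pos (hp : FailureProb p) (hr : NonincreasingReturn r) (hα : 0 < α)
    (hc : PositiveMargin r x t) (h : 0 < effRate p r α k x t) :
    ∃ y ∈ Ioo x 1, 0 < effRate p r α k y t := by
  have hcr : ContinuousWithinAt r (Ico 0 1) x := hr.differentiableOn.continuousOn x hc.mem_Ico
  have hcp : ContinuousWithinAt p (Ico 0 1) x := hp.contDiffOn.continuousOn x hc.mem_Ico
  have hcf : ContinuousWithinAt (fun z => (r z - t) ^ α * (1 - p z) - k * (1 + t) ^ α * p z)
      (Ico 0 1) x :=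
    (((hcr.sub continuousWithinAt_const).rpow_const (Or.inr hα.le)).mul
      (continuousWithinAt_const.sub hcp)).sub (continuousWithinAt_const.mul hcp)
  rw [effRate_of_tax_le hc.tax_lt.le] at h
  have hev := (hcr.eventually_const_lt hc.tax_lt).and (hcf.eventually_const_lt h)
  have hright : 𝓝[>] x ≤ 𝓝[Ico 0 1] x := by
    rw [← nhdsWithin_Ioo_eq_nhdsGT hc.lt_one]
    exact nhdsWithin_mono x fun z hz => ⟨hc.nonneg.trans hz.1.le, hz.2⟩
  obtain ⟨y, ⟨htr, hf⟩, hy⟩ :=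
    ((hev.filter_mono hright).and (Ioo_mem_nhdsGT hc.lt_one)).exists
  exact ⟨y, hy, by rwa [effRate_of_tax_le htr.le]⟩

lemma continuous_effRate_formula (hα : 0 < α) (a b d : ℝ) :
    Continuous fun t : ℝ => (a - t) ^ α * b - k * (1 + t) ^ α * d := by
  have hgain : Continuous fun t : ℝ => (a - t) ^ α :=
    (continuous_const.sub continuous_id).rpow_const fun _ => Or.inr hα.le
  have hloss : Continuous fun t : ℝ => (1 + t) ^ α :=
    (continuous_const.add continuous_id).rpow_const fun _ => Or.inr hα.le
  fun_prop

lemma exists_gt_tax_effRate_pos (hα : 0 < α) (htr : t < r x) (h : 0 < effRate p r α k x t) :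
    ∃ s > t, 0 < effRate p r α k x s := by
  rw [effRate_of_tax_le htr.le] at h
  have hpos :=
    ((continuous_effRate_formula hα (r x) (1 - p x) (p x)).tendsto t).eventually_const_lt h
  obtain ⟨s, hs, hts, hsr⟩ :=
    ((hpos.filter_mono nhdsWithin_le_nhds).and (Ioo_mem_nhdsGT htr)).exists
  exact ⟨s, hts, by rwa [effRate_of_tax_le hsr.le]⟩

lemma eventually_effRate_neg (hp : FailureProb p) (hα : 0 < α) (hk : 0 < k)
    (hx : x ∈ Ioo (0 : ℝ) 1) (hrx : 0 < r x) : ∀ᶠ t in 𝓝[<] r x, effRate p r α k x t < 0 := by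
  have hneg : (r x - r x) ^ α * (1 - p x) - k * (1 + r x) ^ α * p x < 0 := by
    have := hp.pos hx
    rw [sub_self, zero_rpow hα.ne', zero_mul, zero_sub, neg_lt_zero]
    positivity
  have hev := ((continuous_effRate_formula hα (r x) (1 - p x) (p x)).tendsto
    (r x)).eventually_lt_const hneg
  filter_upwards [hev.filter_mono nhdsWithin_le_nhds, self_mem_nhdsWithin] with t ht htr
  rwa [effRate_of_tax_le (le_of_lt htr)]

end EffRate

/-! ### Best responses of a single player -/

/-- The marginal utility of a player investing `b` out of a total of `x`, up to the positive
factor `b ^ (α - 1) * gainTerm p r α x t`. -/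
def marginalPayoff (p r : ℝ → ℝ) (α k b x t : ℝ) : ℝ :=
  α * normalizedRate p r α k x t - b * normalizedDecay p r α k x t

/-- The investment at which a player has no marginal incentive when the total investment is `x`,
that is, the positive part of `gFun`; meaningful in the region `PositiveMargin` with `0 < x`. -/
def share (p r : ℝ → ℝ) (α k x t : ℝ) : ℝ :=
  max (α * normalizedRate p r α k x t / normalizedDecay p r α k x t) 0

/-- A weakening of `IsBestResponse` in which only investments below `b` compete with `b`. -/
def IsDownwardOptimal (p r : ℝ → ℝ) (α k t xbar b : ℝ) : Prop :=
  ∀ y ∈ Icc 0 b, y ^ α * effRate p r α k (y + xbar) t ≤ b ^ α * effRate p r α k (b + xbar) t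

section Player

variable {p r : ℝ → ℝ} {α k b b' c c' x y s t : ℝ}

lemma marginalPayoff_le_marginalPayoff (hp : FailureProb p) (hr : NonincreasingReturn r)
    (hα : 0 < α) (hk : 0 < k) (hb : 0 ≤ b) (hbb' : b ≤ b') (hx : 0 < x) (hxy : x ≤ y)
    (hs : 0 ≤ s) (hst : s ≤ t) (h : PositiveMargin r y t) :
    marginalPayoff p r α k b' y t ≤ marginalPayoff p r α k b x s :=
  have hrate := normalizedRate_le_normalizedRate hp hr hα hk hx.le hxy hs hst h
  have hdecay := normalizedDecay_le_normalizedDecay hp hr hα hk hx hxy hs hst h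
  have hdecay_nonneg :=
    (normalizedDecay_pos hp hr hα hk hx (h.of_le hr hx.le hxy hs hst)).le
  sub_le_sub (mul_le_mul_of_nonneg_left hrate hα.le)
    (mul_le_mul hbb' hdecay hdecay_nonneg (hb.trans hbb'))

lemma share_nonneg : 0 ≤ share p r α k x t := le_max_right _ _

lemma share_eq_zero (hp : FailureProb p) (hr : NonincreasingReturn r) (hα : 0 < α)
    (hk : 0 < k) (hx : 0 < x) (h : PositiveMargin r x t) (hf : effRate p r α k x t ≤ 0) :
    share p r α k x t = 0 :=
  have hrate : normalizedRate p r α k x t ≤ 0 :=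
    not_lt.1 ((h.effRate_pos_iff hp).not.1 hf.not_gt)
  max_eq_right (div_nonpos_of_nonpos_of_nonneg (mul_nonpos_of_nonneg_of_nonpos hα.le hrate)
    (normalizedDecay_pos hp hr hα hk hx h).le)

lemma eventually_share_eq_zero (hp : FailureProb p) (hr : NonincreasingReturn r) (hα : 0 < α)
    (hk : 0 < k) (hx : x ∈ Ioo (0 : ℝ) 1) : ∀ᶠ t in 𝓝[<] r x, share p r α k x t = 0 := by
  have hrx := hr.pos x (Ioo_subset_Ico_self hx)
  filter_upwards [eventually_effRate_neg hp hα hk hx hrx, Ioo_mem_nhdsLT hrx] with t hf ht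
  exact share_eq_zero hp hr hα hk hx.1 ⟨hx.1.le, hx.2, ht.1.le, ht.2⟩ hf.le

lemma le_share_of_marginalPayoff_nonneg (hp : FailureProb p) (hr : NonincreasingReturn r)
    (hα : 0 < α) (hk : 0 < k) (hx : 0 < x) (h : PositiveMargin r x t)
    (hb : 0 ≤ marginalPayoff p r α k b x t) : b ≤ share p r α k x t :=
  le_max_of_le_left ((le_div_iff₀ (normalizedDecay_pos hp hr hα hk hx h)).2 (sub_nonneg.1 hb))

lemma marginalPayoff_share (hp : FailureProb p) (hr : NonincreasingReturn r) (hα : 0 < α)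
    (hk : 0 < k) (hx : 0 < x) (h : PositiveMargin r x t) (hf : 0 < effRate p r α k x t) :
    marginalPayoff p r α k (share p r α k x t) x t = 0 := by
  have hrate := (h.effRate_pos_iff hp).1 hf
  have hdecay := normalizedDecay_pos hp hr hα hk hx h
  rw [marginalPayoff, share, max_eq_left (by positivity), div_mul_cancel₀ _ hdecay.ne', sub_self]

lemma share_pos (hp : FailureProb p) (hr : NonincreasingReturn r) (hα : 0 < α) (hk : 0 < k)
    (hx : 0 < x) (h : PositiveMargin r x t) (hf : 0 < effRate p r α k x t) :
    0 < share p r α k x t :=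
  have hrate := (h.effRate_pos_iff hp).1 hf
  lt_max_of_lt_left (div_pos (mul_pos hα hrate) (normalizedDecay_pos hp hr hα hk hx h))

lemma continuousOn_share_tax (hp : FailureProb p) (hr : NonincreasingReturn r) (hα : 0 < α)
    (hk : 0 < k) (hx : x ∈ Ioo (0 : ℝ) 1) :
    ContinuousOn (fun t => share p r α k x t) (Ico 0 (r x)) := by
  have hne : ∀ t ∈ Ico 0 (r x), r x - t ≠ 0 := fun t ht => (sub_pos.2 ht.2).ne'
  have hmargin : ContinuousOn (fun t => r x - t) (Ico 0 (r x)) := by fun_prop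
  have hweight : ContinuousOn (fun t => lossWeight r α k x t) (Ico 0 (r x)) :=
    continuousOn_const.mul (((by fun_prop : ContinuousOn (fun t : ℝ => 1 + t) _).div hmargin
      hne).rpow_const fun _ _ => Or.inr hα.le)
  have hrate : ContinuousOn (fun t => normalizedRate p r α k x t) (Ico 0 (r x)) :=
    continuousOn_const.sub (hweight.mul continuousOn_const)
  have hdecay : ContinuousOn (fun t => normalizedDecay p r α k x t) (Ico 0 (r x)) :=
    (continuousOn_const.mul (continuousOn_const.div hmargin hne)).add
      ((continuousOn_const.add hweight).mul continuousOn_const)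
  have hdecay_ne : ∀ t ∈ Ico 0 (r x), normalizedDecay p r α k x t ≠ 0 := fun t ht =>
    (normalizedDecay_pos hp hr hα hk hx.1 ⟨hx.1.le, hx.2, ht.1, ht.2⟩).ne'
  exact ((continuousOn_const.mul hrate).div hdecay hdecay_ne).sup continuousOn_const

lemma hasDerivAt_utility (hp : FailureProb p) (hr : NonincreasingReturn r) (hb : 0 < b)
    (hc : 0 ≤ c) (h : PositiveMargin r (b + c) t) :
    HasDerivAt (fun y => y ^ α * effRate p r α k (y + c) t)
      (b ^ (α - 1) * gainTerm p r α (b + c) t * marginalPayoff p r α k b (b + c) t) b := by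
  have hpow := (hasDerivAt_id b).rpow_const (p := α) (Or.inl hb.ne')
  have hrate := (hasDerivAt_effRate (α := α) (k := k) hp hr (by linarith) h).comp_add_const b c
  refine (hpow.mul hrate).congr_deriv ?_
  rw [id_eq, effRate_eq_gainTerm_mul hp h, marginalPayoff, rpow_sub_one hb.ne']
  field_simp
  ring

lemma IsBestResponse.isDownwardOptimal (h : IsBestResponse p r α k t c b) :
    IsDownwardOptimal p r α k t c b := fun y hy => h.2 y ⟨hy.1, hy.2.trans h.1.2⟩

/-- If the rate vanished at a positive investment, halving the investment would make it, and
hence the utility, positive. -/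
lemma IsDownwardOptimal.effRate_pos (h : IsDownwardOptimal p r α k t c b) (hp : FailureProb p)
    (hr : NonincreasingReturn r) (hα : 0 < α) (hk : 0 < k) (ht : 0 ≤ t) (hc : 0 ≤ c)
    (hb : 0 < b) : 0 < effRate p r α k (b + c) t := by
  have hnonneg : 0 ≤ effRate p r α k (b + c) t := by
    have hzero := h 0 ⟨le_rfl, hb.le⟩
    rw [zero_rpow hα.ne', zero_mul] at hzero
    exact nonneg_of_mul_nonneg_right hzero (by positivity)
  refine hnonneg.lt_of_ne fun hvanish => ?_
  obtain ⟨hlt, htr⟩ := lt_one_and_tax_le_of_effRate_nonneg hp hk ht hnonneg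
  have hhalf_pos : 0 < effRate p r α k (b / 2 + c) t :=
    hvanish.trans_lt (effRate_lt_effRate hp hr hα hk (by positivity) (by linarith) hlt ht htr)
  have hhalf := h (b / 2) ⟨by positivity, by linarith⟩
  rw [← hvanish, mul_zero] at hhalf
  exact hhalf.not_gt (by positivity)

lemma IsDownwardOptimal.marginalPayoff_nonneg (h : IsDownwardOptimal p r α k t c b)
    (hp : FailureProb p) (hr : NonincreasingReturn r) (hα : 0 < α) (hk : 0 < k) (ht : 0 ≤ t)
    (hc : 0 ≤ c) (hb : 0 < b) : 0 ≤ marginalPayoff p r α k b (b + c) t := by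
  have hmargin := positiveMargin_of_effRate_pos hp hα hk (by linarith) ht
    (h.effRate_pos hp hr hα hk ht hc hb)
  have hsegment : segment ℝ b 0 ⊆ Icc 0 b := by rw [segment_symm, segment_eq_Icc hb.le]
  have hderiv := sub_mul_nonpos_of_isMaxOn h hsegment (hasDerivAt_utility hp hr hb hc hmargin)
  have hfactor := mul_pos (rpow_pos_of_pos hb (α - 1)) (gainTerm_pos (α := α) hp hmargin)
  rw [zero_sub, neg_mul, neg_nonpos] at hderiv
  exact nonneg_of_mul_nonneg_right (nonneg_of_mul_nonneg_right hderiv hb) hfactor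

lemma IsBestResponse.pos_of_effRate_pos (h : IsBestResponse p r α k t c b) (hp : FailureProb p)
    (hr : NonincreasingReturn r) (hα : 0 < α) (hk : 0 < k) (ht : 0 ≤ t) (hc : 0 ≤ c)
    (hf : 0 < effRate p r α k (b + c) t) : 0 < b := by
  refine h.1.1.lt_of_ne' fun hb => ?_
  rw [hb, zero_add] at hf
  have hmargin := positiveMargin_of_effRate_pos hp hα hk hc ht hf
  obtain ⟨x, ⟨hcx, hx⟩, hfx⟩ := exists_gt_effRate_pos hp hr hα hmargin hf
  have hgain := h.2 (x - c) ⟨by linarith, by linarith⟩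
  rw [hb, zero_rpow hα.ne', zero_mul, sub_add_cancel] at hgain
  exact hgain.not_gt (mul_pos (rpow_pos_of_pos (sub_pos.2 hcx) α) hfx)

lemma IsBestResponse.marginalPayoff_nonpos (h : IsBestResponse p r α k t c b)
    (hp : FailureProb p) (hr : NonincreasingReturn r) (hα : 0 < α) (hk : 0 < k) (ht : 0 ≤ t)
    (hc : 0 ≤ c) (hf : 0 < effRate p r α k (b + c) t) :
    marginalPayoff p r α k b (b + c) t ≤ 0 := by
  have hb := h.pos_of_effRate_pos hp hr hα hk ht hc hf
  have hmargin := positiveMargin_of_effRate_pos hp hα hk (by linarith) ht hf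
  have hb1 : b < 1 := by linarith [hmargin.lt_one]
  have hsegment : segment ℝ b 1 ⊆ Icc 0 1 := by
    rw [segment_eq_Icc hb1.le]
    exact Icc_subset_Icc_left hb.le
  have hderiv := sub_mul_nonpos_of_isMaxOn h.2 hsegment (hasDerivAt_utility hp hr hb hc hmargin)
  have hfactor := mul_pos (rpow_pos_of_pos hb (α - 1)) (gainTerm_pos (α := α) hp hmargin)
  exact nonpos_of_mul_nonpos_right (nonpos_of_mul_nonpos_right hderiv (sub_pos.2 hb1)) hfactor

lemma isMaxOn_utility_of_marginalPayoff_eq_zero (hp : FailureProb p) (hr : NonincreasingReturn r)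
    (hα : 0 < α) (hk : 0 < k) (ht : 0 ≤ t) (hc : 0 ≤ c) (hb : 0 < b) (hbb' : b ≤ b')
    (h : PositiveMargin r (b' + c) t) (hzero : marginalPayoff p r α k b (b + c) t = 0) :
    IsMaxOn (fun y => y ^ α * effRate p r α k (y + c) t) (Ioc 0 b') b := by
  have hmargin : ∀ y, 0 < y → y ≤ b' → PositiveMargin r (y + c) t := fun y hy hyb' =>
    h.of_le hr (by linarith) (by linarith) ht le_rfl
  have hderiv : ∀ y, 0 < y → y ≤ b' → HasDerivAt (fun y => y ^ α * effRate p r α k (y + c) t)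
      (y ^ (α - 1) * gainTerm p r α (y + c) t * marginalPayoff p r α k y (y + c) t) y :=
    fun y hy hyb' => hasDerivAt_utility hp hr hy hc (hmargin y hy hyb')
  have hfactor : ∀ y, 0 < y → y ≤ b' → 0 ≤ y ^ (α - 1) * gainTerm p r α (y + c) t :=
    fun y hy hyb' => (mul_pos (rpow_pos_of_pos hy _) (gainTerm_pos hp (hmargin y hy hyb'))).le
  refine isMaxOn_Ioc_of_deriv (hderiv b hb hbb').continuousAt
    (hderiv b' (hb.trans_le hbb') le_rfl).continuousAt
    (fun y hy => (hderiv y hy.1 (hy.2.le.trans hbb')).differentiableAt.differentiableWithinAt)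
    (fun y hy => (hderiv y (hb.trans hy.1) hy.2.le).differentiableAt.differentiableWithinAt)
    (fun y hy => ?_) fun y hy => ?_
  · have hyb' := hy.2.le.trans hbb'
    rw [(hderiv y hy.1 hyb').deriv]
    refine mul_nonneg (hfactor y hy.1 hyb') (hzero.symm.le.trans ?_)
    exact marginalPayoff_le_marginalPayoff hp hr hα hk hy.1.le hy.2.le (by linarith [hy.1])
      (by linarith [hy.2]) ht le_rfl (hmargin b hb hbb')
  · have hy0 := hb.trans hy.1
    rw [(hderiv y hy0 hy.2.le).deriv]
    refine mul_nonpos_of_nonneg_of_nonpos (hfactor y hy0 hy.2.le) (le_trans ?_ hzero.le)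
    exact marginalPayoff_le_marginalPayoff hp hr hα hk hb.le hy.1.le (by linarith)
      (by linarith [hy.1]) ht le_rfl (hmargin y hy0 hy.2.le)

lemma isBestResponse_of_marginalPayoff_eq_zero (hp : FailureProb p) (hr : NonincreasingReturn r)
    (hα : 0 < α) (hk : 0 < k) (ht : 0 ≤ t) (hc : 0 ≤ c) (hb : 0 < b)
    (hf : 0 < effRate p r α k (b + c) t) (hzero : marginalPayoff p r α k b (b + c) t = 0) :
    IsBestResponse p r α k t c b := by
  have hmargin := positiveMargin_of_effRate_pos hp hα hk (by linarith) ht hf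
  refine ⟨⟨hb.le, by linarith [hmargin.lt_one]⟩, fun y hy => ?_⟩
  have hutility : 0 ≤ b ^ α * effRate p r α k (b + c) t := by positivity
  rcases hy.1.eq_or_lt with rfl | hy0
  · rwa [zero_rpow hα.ne', zero_mul]
  rcases le_or_gt (effRate p r α k (y + c) t) 0 with hfy | hfy
  · exact (mul_nonpos_of_nonneg_of_nonpos (rpow_nonneg hy.1 α) hfy).trans hutility
  have hy_margin := positiveMargin_of_effRate_pos hp hα hk (by linarith) ht hfy
  have hmax_margin : PositiveMargin r (max b y + c) t := by
    rcases max_choice b y with h | h <;> rwa [h]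
  exact isMaxOn_utility_of_marginalPayoff_eq_zero hp hr hα hk ht hc hb (le_max_left b y)
    hmax_margin hzero ⟨hy0, le_max_right b y⟩

lemma isBestResponse_zero (hp : FailureProb p) (hr : NonincreasingReturn r) (hα : 0 < α)
    (hk : 0 < k) (ht : 0 ≤ t) (hc : 0 ≤ c) (hf : effRate p r α k c t ≤ 0) :
    IsBestResponse p r α k t c 0 := by
  refine ⟨⟨le_rfl, zero_le_one⟩, fun y hy => ?_⟩
  rw [zero_rpow hα.ne', zero_mul]
  refine mul_nonpos_of_nonneg_of_nonpos (rpow_nonneg hy.1 α) (not_lt.1 fun hfy => hf.not_gt ?_)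
  exact effRate_pos_of_le hp hr hα hk hc (by linarith [hy.1]) ht le_rfl hfy

lemma isBestResponse_share (hp : FailureProb p) (hr : NonincreasingReturn r) (hα : 0 < α)
    (hk : 0 < k) (hx : 0 < x) (h : PositiveMargin r x t) (hc : 0 ≤ c)
    (hshare : share p r α k x t + c = x) :
    IsBestResponse p r α k t c (share p r α k x t) := by
  rcases le_or_gt (effRate p r α k x t) 0 with hf | hf
  · have hzero := share_eq_zero hp hr hα hk hx h hf
    have hcx : c = x := by linarith
    rw [hzero]
    exact isBestResponse_zero hp hr hα hk h.tax_nonneg hc (hcx ▸ hf)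
  · refine isBestResponse_of_marginalPayoff_eq_zero hp hr hα hk h.tax_nonneg hc
      (share_pos hp hr hα hk hx h hf) ?_ ?_
    · rwa [hshare]
    · rw [hshare, marginalPayoff_share hp hr hα hk hx h hf]

lemma IsBestResponse.le_of_isDownwardOptimal (h : IsBestResponse p r α k s c b)
    (h' : IsDownwardOptimal p r α k t c' b') (hp : FailureProb p) (hr : NonincreasingReturn r)
    (hα : 0 < α) (hk : 0 < k) (hs : 0 ≤ s) (hst : s ≤ t) (hc : 0 ≤ c) (hc' : 0 ≤ c')
    (htotal : b + c ≤ b' + c') : b' ≤ b := by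
  by_contra! hbb'
  have ht : 0 ≤ t := hs.trans hst
  have hb'_pos : 0 < b' := h.1.1.trans_lt hbb'
  have hf' := h'.effRate_pos hp hr hα hk ht hc' hb'_pos
  have hmargin' := positiveMargin_of_effRate_pos hp hα hk (by linarith) ht hf'
  have hf := effRate_pos_of_le hp hr hα hk (by linarith [h.1.1]) htotal hs hst hf'
  have hb := h.pos_of_effRate_pos hp hr hα hk hs hc hf
  have hmargin := positiveMargin_of_effRate_pos hp hα hk (by linarith) hs hf
  have hdecay := normalizedDecay_pos hp hr hα hk (by linarith) hmargin
  have hcontra : 0 < (0 : ℝ) := calc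
    0 ≤ marginalPayoff p r α k b' (b' + c') t :=
      h'.marginalPayoff_nonneg hp hr hα hk ht hc' hb'_pos
    _ ≤ marginalPayoff p r α k b' (b + c) s :=
      marginalPayoff_le_marginalPayoff hp hr hα hk hb'_pos.le le_rfl (by linarith) htotal hs hst
        hmargin'
    _ < marginalPayoff p r α k b (b + c) s :=
      sub_lt_sub_left (mul_lt_mul_of_pos_right hbb' hdecay) _
    _ ≤ 0 := h.marginalPayoff_nonpos hp hr hα hk hs hc hf
  exact hcontra.false

end Player

/-! ### Equilibria, taxes and welfare -/

/-- The social welfare of a profile in the absence of a tax. -/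
def welfare {ι : Type*} [Fintype ι] (p r : ℝ → ℝ) (α k x : ι → ℝ) : ℝ :=
  ∑ i, x i ^ α i * effRate p r (α i) (k i) (∑ l, x l) 0

section Game

variable {ι : Type*} [Fintype ι] {p r : ℝ → ℝ} {α k x z : ι → ℝ} {s t X : ℝ}

section Equilibrium

variable [DecidableEq ι]

lemma IsPNE.isBestResponse (h : IsPNE p r α k t x) (i : ι) :
    IsBestResponse p r (α i) (k i) t (∑ j ∈ Finset.univ.erase i, x j) (x i) :=
  ⟨h.1 i, h.2 i⟩

lemma isPNE_of_isBestResponse (h : ∀ i,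
    IsBestResponse p r (α i) (k i) t (∑ j ∈ Finset.univ.erase i, x j) (x i)) :
    IsPNE p r α k t x :=
  ⟨fun i => (h i).1, fun i => (h i).2⟩

lemma IsPNE.sum_nonneg (h : IsPNE p r α k t x) : 0 ≤ ∑ i, x i :=
  Finset.sum_nonneg fun i _ => (h.1 i).1

/-- Lowering one investment never hurts the other players, so a player who could gain from it
would also raise the welfare. -/
lemma isDownwardOptimal_of_welfare_le (hp : FailureProb p) (hr : NonincreasingReturn r)
    (hα : ∀ i, 0 < α i) (hk : ∀ i, 0 < k i) (hx : ∀ i, x i ∈ Icc (0 : ℝ) 1)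
    (hmax : ∀ z : ι → ℝ, (∀ i, z i ∈ Icc (0 : ℝ) 1) → welfare p r α k z ≤ welfare p r α k x)
    (i : ι) : IsDownwardOptimal p r (α i) (k i) 0 (∑ j ∈ Finset.univ.erase i, x j) (x i) := by
  intro y hy
  set c := ∑ j ∈ Finset.univ.erase i, x j
  have hc : 0 ≤ c := Finset.sum_nonneg fun j _ => (hx j).1
  have hmem : ∀ j, Function.update x i y j ∈ Icc (0 : ℝ) 1 :=
    (Function.forall_update_iff x fun _ v => v ∈ Icc (0 : ℝ) 1).2
      ⟨⟨hy.1, hy.2.trans (hx i).2⟩, fun j _ => hx j⟩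
  have htotal : ∑ j, x j = x i + c := (Finset.add_sum_erase _ x (Finset.mem_univ i)).symm
  have htotal_update : ∑ j, Function.update x i y j = y + c := by
    rw [Finset.sum_update_of_mem (Finset.mem_univ i), ← Finset.erase_eq]
  have hwelfare := hmax _ hmem
  rw [welfare, welfare, htotal, htotal_update, ← Finset.add_sum_erase _ _ (Finset.mem_univ i),
    ← Finset.add_sum_erase _ _ (Finset.mem_univ i), Function.update_self] at hwelfare
  have hothers : ∑ j ∈ Finset.univ.erase i, x j ^ α j * effRate p r (α j) (k j) (x i + c) 0 ≤
      ∑ j ∈ Finset.univ.erase i,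
        Function.update x i y j ^ α j * effRate p r (α j) (k j) (y + c) 0 := by
    refine Finset.sum_le_sum fun j hj => ?_
    rw [Function.update_of_ne (Finset.ne_of_mem_erase hj)]
    exact mul_le_mul_of_nonneg_left (antitoneOn_effRate_zero hp hr (hα j) (hk j)
      (add_nonneg hy.1 hc) (add_nonneg (hx i).1 hc) (by linarith [hy.2]))
      (rpow_nonneg (hx j).1 _)
  linarith

lemma IsPNE.sum_le_sum_of_isDownwardOptimal (hx : IsPNE p r α k s x) (hp : FailureProb p)
    (hr : NonincreasingReturn r) (hα : ∀ i, 0 < α i) (hk : ∀ i, 0 < k i) (hs : 0 ≤ s)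
    (hst : s ≤ t) (hz : ∀ i, 0 ≤ z i)
    (hzopt : ∀ i, IsDownwardOptimal p r (α i) (k i) t (∑ j ∈ Finset.univ.erase i, z j) (z i)) :
    ∑ i, z i ≤ ∑ i, x i := by
  by_contra! hlt
  refine hlt.not_ge (Finset.sum_le_sum fun i _ => ?_)
  refine (hx.isBestResponse i).le_of_isDownwardOptimal (hzopt i) hp hr (hα i) (hk i) hs hst
    (Finset.sum_nonneg fun j _ => (hx.1 j).1) (Finset.sum_nonneg fun j _ => hz j) ?_
  rw [Finset.add_sum_erase _ x (Finset.mem_univ i), Finset.add_sum_erase _ z (Finset.mem_univ i)]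
  exact hlt.le

lemma IsPNE.sum_le_sum (hx : IsPNE p r α k s x) (hz : IsPNE p r α k t z) (hp : FailureProb p)
    (hr : NonincreasingReturn r) (hα : ∀ i, 0 < α i) (hk : ∀ i, 0 < k i) (hs : 0 ≤ s)
    (hst : s ≤ t) : ∑ i, z i ≤ ∑ i, x i :=
  hx.sum_le_sum_of_isDownwardOptimal hp hr hα hk hs hst (fun i => (hz.1 i).1)
    fun i => (hz.isBestResponse i).isDownwardOptimal

lemma IsPNE.exists_effRate_pos (hx : IsPNE p r α k t x) (hp : FailureProb p)
    (hr : NonincreasingReturn r) (hα : ∀ i, 0 < α i) (hk : ∀ i, 0 < k i) (ht : 0 ≤ t)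
    (hpos : 0 < ∑ i, x i) : ∃ i, 0 < effRate p r (α i) (k i) (∑ j, x j) t := by
  obtain ⟨i, -, hi⟩ := (Finset.sum_pos_iff_of_nonneg fun i _ => (hx.1 i).1).1 hpos
  refine ⟨i, ?_⟩
  rw [← Finset.add_sum_erase _ x (Finset.mem_univ i)]
  exact (hx.isBestResponse i).isDownwardOptimal.effRate_pos hp hr (hα i) (hk i) ht
    (Finset.sum_nonneg fun j _ => (hx.1 j).1) hi

lemma isPNE_share (hp : FailureProb p) (hr : NonincreasingReturn r) (hα : ∀ i, 0 < α i)
    (hk : ∀ i, 0 < k i) (hX : 0 < X) (h : PositiveMargin r X t)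
    (hsum : ∑ i, share p r (α i) (k i) X t = X) :
    IsPNE p r α k t fun i => share p r (α i) (k i) X t :=
  isPNE_of_isBestResponse fun i => isBestResponse_share hp hr (hα i) (hk i) hX h
    (Finset.sum_nonneg fun _ _ => share_nonneg)
    ((Finset.add_sum_erase _ _ (Finset.mem_univ i)).trans hsum)

end Equilibrium

lemma le_tbar_of_effRate_pos (hp : FailureProb p) (hr : NonincreasingReturn r)
    (hα : ∀ i, 0 < α i) (hk : ∀ i, 0 < k i) (ht : 0 ≤ t) (hX : X ∈ Icc (0 : ℝ) 1) {i : ι}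
    (hf : 0 < effRate p r (α i) (k i) X t) : t ≤ tbar p r α k := by
  refine le_csSup ⟨r 0, fun s ⟨hs, j, y, hy, hfy⟩ => ?_⟩ ⟨ht, i, X, hX, hf⟩
  have hmargin := positiveMargin_of_effRate_pos hp (hα j) (hk j) hy.1 hs hfy
  exact hmargin.tax_lt.le.trans (hr.antitoneOn ⟨le_rfl, one_pos⟩ hmargin.mem_Ico hy.1)

lemma effRate_nonpos_of_tbar_le (hp : FailureProb p) (hr : NonincreasingReturn r)
    (hα : ∀ i, 0 < α i) (hk : ∀ i, 0 < k i) (ht : 0 ≤ t) (htbar : tbar p r α k ≤ t)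
    (hX : X ∈ Icc (0 : ℝ) 1) (i : ι) : effRate p r (α i) (k i) X t ≤ 0 := by
  by_contra! hf
  have hmargin := positiveMargin_of_effRate_pos hp (hα i) (hk i) hX.1 ht hf
  obtain ⟨s, hts, hfs⟩ := exists_gt_tax_effRate_pos (hα i) hmargin.tax_lt hf
  exact (htbar.trans_lt hts).not_ge
    (le_tbar_of_effRate_pos hp hr hα hk (ht.trans hts.le) hX hfs)

lemma exists_sum_share_eq (hp : FailureProb p) (hr : NonincreasingReturn r) (hα : ∀ i, 0 < α i)
    (hk : ∀ i, 0 < k i) (hX : 0 < X) (h : PositiveMargin r X s)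
    (hsum : X ≤ ∑ i, share p r (α i) (k i) X s) :
    ∃ t, s ≤ t ∧ PositiveMargin r X t ∧ ∑ i, share p r (α i) (k i) X t = X := by
  have hX' : X ∈ Ioo (0 : ℝ) 1 := ⟨hX, h.lt_one⟩
  have hvanish : ∀ᶠ t in 𝓝[<] r X, ∀ i, share p r (α i) (k i) X t = 0 :=
    Filter.eventually_all.2 fun i => eventually_share_eq_zero hp hr (hα i) (hk i) hX'
  obtain ⟨T, hzero, hsT, hTr⟩ := (hvanish.and (Ioo_mem_nhdsLT h.tax_lt)).exists
  have hsubset : Icc s T ⊆ Ico 0 (r X) := fun t ht =>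
    ⟨h.tax_nonneg.trans ht.1, ht.2.trans_lt hTr⟩
  have hcont : ContinuousOn (fun t => ∑ i, share p r (α i) (k i) X t) (Icc s T) :=
    continuousOn_finsetSum _ fun i _ =>
      (continuousOn_share_tax hp hr (hα i) (hk i) hX').mono hsubset
  have hzero_sum : ∑ i, share p r (α i) (k i) X T = 0 := Finset.sum_eq_zero fun i _ => hzero i
  obtain ⟨t, ht, hsum_eq⟩ := intermediate_value_Icc' hsT.le hcont ⟨hzero_sum.trans_le hX.le, hsum⟩
  exact ⟨t, ht.1, ⟨hX.le, h.lt_one, (hsubset ht).1, (hsubset ht).2⟩, hsum_eq⟩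

variable [DecidableEq ι]

lemma isPNE_zero (hp : FailureProb p) (hr : NonincreasingReturn r) (hα : ∀ i, 0 < α i)
    (hk : ∀ i, 0 < k i) (ht : 0 ≤ t) (hf : ∀ i, effRate p r (α i) (k i) 0 t ≤ 0) :
    IsPNE p r α k t 0 := by
  refine isPNE_of_isBestResponse fun i => ?_
  simp only [Pi.zero_apply, Finset.sum_const_zero]
  exact isBestResponse_zero hp hr (hα i) (hk i) ht le_rfl (hf i)

lemma IsPNE.le_share (hx : IsPNE p r α k s x) (hp : FailureProb p) (hr : NonincreasingReturn r)
    (hα : ∀ i, 0 < α i) (hk : ∀ i, 0 < k i) (hs : 0 ≤ s) (hX : 0 < X) (hle : X ≤ ∑ i, x i)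
    (h : PositiveMargin r (∑ i, x i) s) (i : ι) : x i ≤ share p r (α i) (k i) X s := by
  rcases (hx.1 i).1.eq_or_lt with hi | hi
  · exact hi ▸ share_nonneg
  have hmarginal := (hx.isBestResponse i).isDownwardOptimal.marginalPayoff_nonneg hp hr (hα i)
    (hk i) hs (Finset.sum_nonneg fun j _ => (hx.1 j).1) hi
  rw [Finset.add_sum_erase _ x (Finset.mem_univ i)] at hmarginal
  exact le_share_of_marginalPayoff_nonneg hp hr (hα i) (hk i) hX (h.of_le hr hX.le hle hs le_rfl)
    (hmarginal.trans (marginalPayoff_le_marginalPayoff hp hr (hα i) (hk i) hi.le le_rfl hX hle hs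
      le_rfl h))

lemma IsPNE.exists_isPNE_sum_eq (hx : IsPNE p r α k s x) (hp : FailureProb p)
    (hr : NonincreasingReturn r) (hα : ∀ i, 0 < α i) (hk : ∀ i, 0 < k i) (hs : 0 ≤ s)
    (hX : 0 < X) (hle : X ≤ ∑ i, x i) :
    ∃ t, s ≤ t ∧ ∃ z, IsPNE p r α k t z ∧ ∑ i, z i = X := by
  obtain ⟨i, hf⟩ := hx.exists_effRate_pos hp hr hα hk hs (hX.trans_le hle)
  have hmargin := positiveMargin_of_effRate_pos hp (hα i) (hk i) hx.sum_nonneg hs hf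
  have hshare : X ≤ ∑ i, share p r (α i) (k i) X s :=
    hle.trans (Finset.sum_le_sum fun i _ => hx.le_share hp hr hα hk hs hX hle hmargin i)
  obtain ⟨t, hst, ht, hsum⟩ :=
    exists_sum_share_eq hp hr hα hk hX (hmargin.of_le hr hX.le hle hs le_rfl) hshare
  exact ⟨t, hst, _, isPNE_share hp hr hα hk hX ht hsum, hsum⟩

lemma IsPNE.le_tbar (hx : IsPNE p r α k t x) (hp : FailureProb p) (hr : NonincreasingReturn r)
    (hα : ∀ i, 0 < α i) (hk : ∀ i, 0 < k i) (ht : 0 ≤ t) (hpos : 0 < ∑ i, x i) :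
    t ≤ tbar p r α k := by
  obtain ⟨i, hf⟩ := hx.exists_effRate_pos hp hr hα hk ht hpos
  have hmargin := positiveMargin_of_effRate_pos hp (hα i) (hk i) hpos.le ht hf
  exact le_tbar_of_effRate_pos hp hr hα hk ht (Ico_subset_Icc_self hmargin.mem_Ico) hf

end Game

theorem statement18_general {ι : Type*} [Fintype ι] [DecidableEq ι] {p r : ℝ → ℝ} {α k : ι → ℝ}
    (hp : FailureProb p) (hr : NonincreasingReturn r) (hα : ∀ i, 0 < α i) (hk : ∀ i, 0 < k i)
    (htbar : 0 < tbar p r α k) {x0 : ι → ℝ} (hx0 : IsPNE p r α k 0 x0)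
    {xOPT : ι → ℝ} (hOPTmem : ∀ i, xOPT i ∈ Icc (0 : ℝ) 1)
    (hOPT : ∀ z : ι → ℝ, (∀ i, z i ∈ Icc (0 : ℝ) 1) → welfare p r α k z ≤ welfare p r α k xOPT) :
    (∀ xstar ∈ Icc (0 : ℝ) (∑ i, x0 i),
      ∃ t ∈ Icc (0 : ℝ) (tbar p r α k),
        ∃ x : ι → ℝ, IsPNE p r α k t x ∧ ∑ i, x i = xstar) ∧
    (∃ t ∈ Icc (0 : ℝ) (tbar p r α k),
      ∃ x : ι → ℝ, IsPNE p r α k t x ∧ ∑ i, x i = ∑ i, xOPT i) ∧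
    (∀ xstar : ℝ, ∑ i, x0 i < xstar →
      ¬ ∃ t : ℝ, 0 < t ∧ ∃ x : ι → ℝ, IsPNE p r α k t x ∧ ∑ i, x i = xstar) := by
  have hachievable : ∀ xstar ∈ Icc (0 : ℝ) (∑ i, x0 i), ∃ t ∈ Icc (0 : ℝ) (tbar p r α k),
      ∃ x : ι → ℝ, IsPNE p r α k t x ∧ ∑ i, x i = xstar := by
    rintro xstar ⟨hnonneg, hle⟩
    rcases hnonneg.eq_or_lt with rfl | hpos
    · exact ⟨tbar p r α k, right_mem_Icc.2 htbar.le, 0, isPNE_zero hp hr hα hk htbar.le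
        (effRate_nonpos_of_tbar_le hp hr hα hk htbar.le le_rfl (left_mem_Icc.2 zero_le_one)),
        Finset.sum_const_zero⟩
    · obtain ⟨t, ht, x, hx, rfl⟩ := hx0.exists_isPNE_sum_eq hp hr hα hk le_rfl hpos hle
      exact ⟨t, ⟨ht, hx.le_tbar hp hr hα hk ht hpos⟩, x, hx, rfl⟩
  have hOPT_nonneg : ∀ i, 0 ≤ xOPT i := fun i => (hOPTmem i).1
  have hOPT_le := hx0.sum_le_sum_of_isDownwardOptimal hp hr hα hk le_rfl le_rfl hOPT_nonneg
    (isDownwardOptimal_of_welfare_le hp hr hα hk hOPTmem hOPT)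
  refine ⟨hachievable, hachievable _ ⟨Finset.sum_nonneg fun i _ => hOPT_nonneg i, hOPT_le⟩, ?_⟩
  rintro _ hlt ⟨t, ht, x, hx, rfl⟩
  exact hlt.not_ge (hx0.sum_le_sum hx hp hr hα hk le_rfl ht.le)

end

/-- for a strictly decreasing rate of return, every utilization
level in `[0, x^0_NE]` is achieved at the PNE for some tax rate in `[0, t̄]`
(in particular the socially optimal utilization `x^0_OPT`), and no utilization
level exceeding `x^0_NE` is achievable by a positive tax rate. -/
theorem statement18 {ι : Type*} [Fintype ι] [DecidableEq ι] [Nonempty ι]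
    (p r : ℝ → ℝ) (α k : ι → ℝ)
    (hp : FailureProb p) (hr : RateOfReturn r)
    (hdec : StrictAntiOn r (Icc (0:ℝ) 1))
    (hα : ∀ i, α i ∈ Ioc (0:ℝ) 1) (hk : ∀ i, 0 < k i)
    (htbar : 0 < tbar p r α k)
    (x0 : ι → ℝ) (hx0 : IsPNE p r α k 0 x0)
    (xOPT : ι → ℝ) (hOPTmem : ∀ i, xOPT i ∈ Icc (0:ℝ) 1)
    (hOPT : ∀ z : ι → ℝ, (∀ i, z i ∈ Icc (0:ℝ) 1) →
      ∑ i, z i ^ α i * effRate p r (α i) (k i) (∑ l, z l) 0 ≤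
        ∑ i, xOPT i ^ α i * effRate p r (α i) (k i) (∑ l, xOPT l) 0) :
    (∀ xstar ∈ Icc (0:ℝ) (∑ i, x0 i),
      ∃ t ∈ Icc (0:ℝ) (tbar p r α k),
        ∃ x : ι → ℝ, IsPNE p r α k t x ∧ ∑ i, x i = xstar) ∧
    (∃ t ∈ Icc (0:ℝ) (tbar p r α k),
      ∃ x : ι → ℝ, IsPNE p r α k t x ∧ ∑ i, x i = ∑ i, xOPT i) ∧
    (∀ xstar : ℝ, ∑ i, x0 i < xstar →
      ¬ ∃ t : ℝ, 0 < t ∧ ∃ x : ι → ℝ, IsPNE p r α k t x ∧ ∑ i, x i = xstar) :=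
  statement18_general hp (hr.nonincreasingReturn hdec.antitoneOn) (fun i => (hα i).1) hk htbar hx0
    hOPTmem hOPT
end
end
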